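/- arXiv:2112.08685 — 3 statements merged into one kernel-verified Lean document; each statement's English description precedes it below -/
import Mathlib

section
/- Let t ≥ 15 be an integer and 0 < p ≤ p_0(t). Then there exist constants ε₀ = ε₀(p,t) > 0 and C = C(p,t) > 0 such that: for every 0 < ε < ε₀, every n, and every shifted 3-wise t-intersecting family 𝒢 ⊆ 2^[n] with μ_p(𝒢) = p^t − ε, there is a family F ∈ {F_0^t, F_1^t} with μ_p(F △ 𝒢) < C·ε, where F △ 𝒢 denotes the symmetric difference (F ∪ 𝒢) \ (F ∩ 𝒢). -/
/-!
View `G ⊆ [n]` as a lattice walk whose `k`-th step is up if `k ∈ G` and right otherwise; under `μ_p`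
the steps are independent. Passing to the up-closure `U` of `𝒢` keeps all hypotheses and does not
decrease the measure. The key claim (`nontrivial_bound`) is that `U ⊆ F_0^t`, or `U ⊆ F_1^t`, or
`μ_p(U) ≤ 0.99 p^t`. Since `μ_p(F_0^t)` and `μ_p(F_1^t)` are at most `p^t`, the theorem follows with
`ε₀ = p^t / 100` and `C = 2`: the third alternative is excluded, and
`μ_p(F_s^t △ 𝒢) = μ_p(F_s^t) - μ_p(𝒢) ≤ ε`.

Frankl's lemma (`frankl`) says that any three members of `U` satisfy
`|G₁ ∩ [k]| + |G₂ ∩ [k]| + |G₃ ∩ [k]| ≥ 2k + t` for some `k ≤ n`; in particular every walk hits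
`y = 2x + t`, an event of probability at most `α^t ≤ e p^t`, where `α` is the root of
`q(x + x²) = p`. Walks hitting `y = 2x + t + 1` contribute at most `α^(t+1) ≤ 0.794 p^t`. For the
remaining walks, which are weakly below `y = 2x + t`, there are two possibilities.

* Each of them touches the line at least twice. The second contact costs a factor `q α²`
  (`mu_le_twice`).
* One of them touches it exactly once, at `(s, t + 2s)`. By Frankl's lemma they then all pass through
  this point. For `s ≥ 3` the ballot count of such paths suffices (`contact_large`). For
  `s ≤ 2` either `U ⊆ F_s^t` or, by shiftedness, `[n] \ [t+2s, t+3s] ∈ U`; applying Frankl's lemma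
  to this set and `G` twice shows that, with few exceptions, `G` must later rise to the line
  `y = x + t + s + 1`, which costs a factor `α²` (`mu_le_point`). For `s = 2` the family `F_2^t`
  itself is too small.

All probability bounds are instances of Ville's maximal inequality (`ville`) for suitable
martingales; the numerical input is `(t+2) p² ≤ 1 + p`, which is equivalent to `p ≤ p₀(t)`, and its
consequences `p < 0.2738` and `α ≤ 0.292` for `t ≥ 15`.
-/

open Finset

/-- The `p`-measure of a family of subsets of `[n] = {1,…,n}`. -/
noncomputable def mu (p : ℝ) (n : ℕ) (𝒢 : Finset (Finset ℕ)) : ℝ :=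
  ∑ G ∈ 𝒢, p ^ G.card * (1 - p) ^ (n - G.card)

/-- `𝒢` is a family of subsets of `[n] = {1,…,n}`. -/
def FamilyOn (n : ℕ) (𝒢 : Finset (Finset ℕ)) : Prop :=
  ∀ G ∈ 𝒢, G ⊆ Finset.Icc 1 n

/-- `𝒢` is 3-wise `t`-intersecting. -/
def Intersecting3 (t : ℕ) (𝒢 : Finset (Finset ℕ)) : Prop :=
  ∀ G₁ ∈ 𝒢, ∀ G₂ ∈ 𝒢, ∀ G₃ ∈ 𝒢, t ≤ (G₁ ∩ G₂ ∩ G₃).card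

/-- `𝒢` is shifted (stable under all shifting operations `σ_{i,j}`). -/
def Shifted (n : ℕ) (𝒢 : Finset (Finset ℕ)) : Prop :=
  ∀ i j : ℕ, 1 ≤ i → i < j → j ≤ n → ∀ G ∈ 𝒢, j ∈ G → i ∉ G →
    insert i (G.erase j) ∈ 𝒢

/-- `𝒢` is inclusion maximal as a family of subsets of `[n]`. -/
def InclMaximal (n : ℕ) (𝒢 : Finset (Finset ℕ)) : Prop :=
  ∀ G ∈ 𝒢, ∀ H : Finset ℕ, G ⊆ H → H ⊆ Finset.Icc 1 n → H ∈ 𝒢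

/-- The family `F_s^t = {F ⊆ [n] : |F ∩ [t+3s]| ≥ t+2s}`. -/
def Fst (n t s : ℕ) : Finset (Finset ℕ) :=
  (Finset.Icc 1 n).powerset.filter
    (fun F => t + 2 * s ≤ (F ∩ Finset.Icc 1 (t + 3 * s)).card)

/-- The threshold `p₀(t) = 2/(√(4t+9) − 1)`. -/
noncomputable def p0 (t : ℕ) : ℝ := 2 / (Real.sqrt (4 * t + 9) - 1)

/-- `α(p) = (√((1+3p)/(1−p)) − 1)/2`. -/
noncomputable def alpha (p : ℝ) : ℝ := (Real.sqrt ((1 + 3 * p) / (1 - p)) - 1) / 2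

/-- Two families of subsets of `[n]` are isomorphic: one is the image of the
other under a permutation of `[n]`. -/
def Isom (n : ℕ) (𝒢 𝒢' : Finset (Finset ℕ)) : Prop :=
  ∃ π : Equiv.Perm ℕ, (∀ x ∈ Finset.Icc 1 n, π x ∈ Finset.Icc 1 n) ∧
    𝒢' = 𝒢.image (fun G => G.image π)

/-- The walk of `G ⊆ [n]` hits the line `y = 2x + c`
(at some step `j ≤ n`, where hitting at step `j` means `3|G∩[j]| = 2j + c`). -/
def HitsLine (n c : ℕ) (G : Finset ℕ) : Prop :=
  ∃ j : ℕ, j ≤ n ∧ 3 * (G ∩ Finset.Icc 1 j).card = 2 * j + c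

/-! ### Prefix counts, shifting and domination -/

/-- `cnt G k = |G ∩ [k]|`: the height of the walk of `G` after `k` steps. -/
def cnt (G : Finset ℕ) (k : ℕ) : ℕ := (G ∩ Finset.Icc 1 k).card

lemma cnt_zero (G : Finset ℕ) : cnt G 0 = 0 := by simp [cnt]

lemma cnt_succ (G : Finset ℕ) (k : ℕ) :
    cnt G (k + 1) = cnt G k + if k + 1 ∈ G then 1 else 0 := by
  unfold cnt
  have h : Finset.Icc 1 (k + 1) = insert (k + 1) (Finset.Icc 1 k) := by
    ext x; simp only [mem_Icc, mem_insert]; omega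
  rw [h]
  split_ifs with hk
  · rw [Finset.inter_insert_of_mem hk, Finset.card_insert_of_notMem (by simp)]
  · rw [Finset.inter_insert_of_notMem hk, add_zero]

lemma cnt_le (G : Finset ℕ) (k : ℕ) : cnt G k ≤ k := by
  induction k with
  | zero => simp [cnt_zero]
  | succ k ih => rw [cnt_succ]; split_ifs <;> omega

lemma cnt_mono (G : Finset ℕ) {k l : ℕ} (h : k ≤ l) : cnt G k ≤ cnt G l := by
  induction l, h using Nat.le_induction with
  | base => exact le_rfl
  | succ l _ ih => rw [cnt_succ]; omega

lemma cnt_lip (G : Finset ℕ) {k l : ℕ} (h : k ≤ l) : cnt G l ≤ cnt G k + (l - k) := by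
  induction l, h using Nat.le_induction with
  | base => simp
  | succ l _ ih => rw [cnt_succ]; split_ifs <;> omega

lemma cnt_subset {G H : Finset ℕ} {k : ℕ} (h : G ∩ Finset.Icc 1 k ⊆ H) :
    cnt G k ≤ cnt H k :=
  Finset.card_le_card (Finset.subset_inter h Finset.inter_subset_right)

lemma inter_Icc_inter (G : Finset ℕ) {j k : ℕ} (h : j ≤ k) :
    (G ∩ Finset.Icc 1 k) ∩ Finset.Icc 1 j = G ∩ Finset.Icc 1 j := by
  ext x; simp only [mem_inter, mem_Icc]; constructor
  · tauto
  · rintro ⟨a, b, c⟩; exact ⟨⟨a, b, by omega⟩, b, c⟩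

lemma cnt_inter (G : Finset ℕ) {j k : ℕ} (h : j ≤ k) :
    cnt (G ∩ Finset.Icc 1 k) j = cnt G j := by
  unfold cnt; rw [inter_Icc_inter G h]

/-- Effect of a shift `j → i` on the prefix counts. -/
lemma cnt_shift {G : Finset ℕ} {i j : ℕ} (hi : 1 ≤ i) (hij : i < j) (hj : j ∈ G) (hiG : i ∉ G)
    (k : ℕ) : cnt (insert i (G.erase j)) k = cnt G k + if i ≤ k ∧ k < j then 1 else 0 := by
  induction k with
  | zero => rw [if_neg (by omega)]; simp [cnt_zero]
  | succ k ih =>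
    rw [cnt_succ, cnt_succ, ih]
    by_cases h1 : k + 1 = i
    · subst h1
      rw [if_neg (by omega), if_pos (by simp), if_neg hiG, if_pos (by omega)]
    · by_cases h2 : k + 1 = j
      · subst h2
        rw [if_pos (by omega), if_neg (by simp; omega), if_pos hj, if_neg (by omega)]
      · have : (k + 1 ∈ insert i (G.erase j)) ↔ k + 1 ∈ G := by simp [h1, h2]
        simp only [this]
        have e : (i ≤ k + 1 ∧ k + 1 < j) ↔ (i ≤ k ∧ k < j) := by omega
        simp only [e]; omega

/-- A shifted up-closed family is closed under moving to a walk that dominates a given walk. -/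
lemma dominate {n : ℕ} {U : Finset (Finset ℕ)} (hS : Shifted n U) (hM : InclMaximal n U)
    (hF : FamilyOn n U) {H : Finset ℕ} (hH : H ⊆ Finset.Icc 1 n) :
    ∀ N : ℕ, ∀ G ∈ U, (G \ H).card = N → (∀ k, cnt G k ≤ cnt H k) → H ∈ U := by
  intro N
  induction N with
  | zero =>
    intro G hG h0 _
    exact hM G hG H (by simpa [Finset.sdiff_eq_empty_iff_subset] using h0) hH
  | succ N ih =>
    intro G hG hN hdom
    have hne : (G \ H).Nonempty := by rw [← Finset.card_pos]; omega
    -- the smallest element of `G \ H` is moved to an element of `H \ G` below it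
    obtain ⟨j, hj, hmin⟩ := Finset.exists_min_image (G \ H) id hne
    rw [Finset.mem_sdiff] at hj
    have hsub : ∀ x ∈ G, x < j → x ∈ H := by
      intro x hx hxj
      by_contra hxH
      have := hmin x (Finset.mem_sdiff.2 ⟨hx, hxH⟩)
      simp at this; omega
    have hj1 : 1 ≤ j := (Finset.mem_Icc.1 (hF G hG hj.1)).1
    have hjn : j ≤ n := (Finset.mem_Icc.1 (hF G hG hj.1)).2
    obtain ⟨i, hiH, hij, hiG⟩ : ∃ i, i ∈ H ∧ i < j ∧ i ∉ G := by
      by_contra hcon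
      push Not at hcon
      obtain ⟨j', rfl⟩ : ∃ j', j = j' + 1 := ⟨j - 1, by omega⟩
      have h1 := hdom (j' + 1)
      rw [cnt_succ, cnt_succ, if_pos hj.1, if_neg hj.2] at h1
      have h2 : cnt H j' ≤ cnt G j' := by
        apply cnt_subset
        intro x hx
        simp only [mem_inter, mem_Icc] at hx
        exact hcon x hx.1 (by omega)
      omega
    have hi1 : 1 ≤ i := (Finset.mem_Icc.1 (hH hiH)).1
    refine ih _ (hS i j hi1 hij hjn G hG hj.1 hiG) ?_ ?_
    · have : insert i (G.erase j) \ H = (G \ H).erase j := by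
        ext x; simp only [mem_sdiff, mem_insert, mem_erase]
        constructor
        · rintro ⟨rfl | h, h'⟩
          · exact absurd hiH h'
          · tauto
        · tauto
      rw [this, Finset.card_erase_of_mem (by simp [hj]), hN]; rfl
    · intro k
      rw [cnt_shift hi1 hij hj.1 hiG]
      split_ifs with hk
      · have : G ∩ Finset.Icc 1 k ⊂ H ∩ Finset.Icc 1 k := by
          rw [Finset.ssubset_iff_of_subset]
          · exact ⟨i, by simp [hiH, hi1, hk.1], by simp [hiG]⟩
          · intro x hx
            simp only [mem_inter, mem_Icc] at hx ⊢
            exact ⟨hsub x hx.1 (by omega), hx.2⟩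
        exact Finset.card_lt_card this
      · simpa using hdom k

/-- Frankl's lemma: three members of a shifted 3-wise `t`-intersecting family satisfy
`|G₁ ∩ [k]| + |G₂ ∩ [k]| + |G₃ ∩ [k]| ≥ 2k + t` for some `k ≤ n`.
Otherwise the common intersection could be shrunk by shifts, keeping the failure, down to fewer
than `t` elements. -/
lemma frankl {n t : ℕ} {U : Finset (Finset ℕ)} (ht : 1 ≤ t) (hS : Shifted n U)
    (hF : FamilyOn n U) (hI : Intersecting3 t U) :
    ∀ N : ℕ, ∀ G₁ ∈ U, ∀ G₂ ∈ U, ∀ G₃ ∈ U, (G₁ ∩ G₂ ∩ G₃).card = N →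
      ∃ k ≤ n, 2 * k + t ≤ cnt G₁ k + cnt G₂ k + cnt G₃ k := by
  intro N
  induction N with
  | zero =>
    intro G₁ h₁ G₂ h₂ G₃ h₃ h
    have := hI G₁ h₁ G₂ h₂ G₃ h₃
    omega
  | succ N ih =>
    intro G₁ h₁ G₂ h₂ G₃ h₃ hN
    by_contra hcon
    push Not at hcon
    have hNt := hI G₁ h₁ G₂ h₂ G₃ h₃
    have hne : (G₁ ∩ G₂ ∩ G₃).Nonempty := by rw [← Finset.card_pos]; omega
    -- `j` is the largest common element
    obtain ⟨j, hj, hmax⟩ := Finset.exists_max_image (G₁ ∩ G₂ ∩ G₃) id hne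
    have hj' := hj
    simp only [mem_inter] at hj
    obtain ⟨⟨hj1, hj2⟩, hj3⟩ := hj
    have hj0 : 1 ≤ j := (Finset.mem_Icc.1 (hF G₁ h₁ hj1)).1
    have hjn : j ≤ n := (Finset.mem_Icc.1 (hF G₁ h₁ hj1)).2
    let m : ℕ → ℕ := fun x => (if x ∈ G₁ then 1 else 0) + (if x ∈ G₂ then 1 else 0) +
      (if x ∈ G₃ then 1 else 0)
    have hsum : ∀ k, cnt G₁ (k+1) + cnt G₂ (k+1) + cnt G₃ (k+1) =
        cnt G₁ k + cnt G₂ k + cnt G₃ k + m (k + 1) := by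
      intro k; simp only [cnt_succ, m]; omega
    -- some `i < j` is missed by two of the three sets
    have hex : ((Finset.Icc 1 j).filter (fun i => m i ≤ 1)).Nonempty := by
      by_contra hemp
      rw [Finset.not_nonempty_iff_eq_empty, Finset.filter_eq_empty_iff] at hemp
      have key : ∀ k ≤ j, 2 * k + cnt (G₁ ∩ G₂ ∩ G₃) k ≤ cnt G₁ k + cnt G₂ k + cnt G₃ k := by
        intro k
        induction k with
        | zero => intro _; simp [cnt_zero]
        | succ k ihk =>
          intro hk
          have h := hemp (x := k + 1) (by simp; omega)
          have := ihk (by omega)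
          rw [hsum, cnt_succ]
          have : 2 + (if k + 1 ∈ G₁ ∩ G₂ ∩ G₃ then 1 else 0) ≤ m (k + 1) := by
            split_ifs with hc
            · simp only [mem_inter] at hc
              simp [m, hc]
            · omega
          omega
      have hk := key j le_rfl
      have hfull : cnt (G₁ ∩ G₂ ∩ G₃) j = (G₁ ∩ G₂ ∩ G₃).card := by
        unfold cnt
        congr 1
        rw [Finset.inter_eq_left]
        intro x hx
        have := hmax x hx
        simp only [id] at this
        simp only [mem_inter] at hx
        exact Finset.mem_Icc.2 ⟨(Finset.mem_Icc.1 (hF G₁ h₁ hx.1.1)).1, this⟩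
      have := hcon j hjn
      omega
    obtain ⟨i, hi, himax⟩ := Finset.exists_max_image _ id hex
    simp only [mem_filter, mem_Icc, id] at hi himax
    obtain ⟨⟨hi1, hij⟩, him⟩ := hi
    have hmj : m j = 3 := by simp [m, hj1, hj2, hj3]
    have hij' : i < j := by
      rcases Nat.lt_or_ge i j with h | h
      · exact h
      · have : i = j := by omega
        subst this; omega
    -- the failure is strict on `[i, j)`, which leaves room for the shift `j → i`
    have hroom : ∀ d k, k + 1 + d = j → i ≤ k →
        cnt G₁ k + cnt G₂ k + cnt G₃ k + 1 < 2 * k + t := by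
      intro d
      induction d with
      | zero =>
        intro k hk _
        have h1 := hsum k
        have h2 := hcon (k + 1) (by omega)
        have : k + 1 = j := by omega
        rw [this] at h1 h2
        omega
      | succ d ihd =>
        intro k hk hik
        have h0 := ihd (k + 1) (by omega) (by omega)
        have h1 := hsum k
        have h2 : 2 ≤ m (k + 1) := by
          by_contra hlt
          have := himax (k + 1) ⟨⟨by omega, by omega⟩, by omega⟩
          omega
        omega
    have hroom' : ∀ k, i ≤ k ∧ k < j → cnt G₁ k + cnt G₂ k + cnt G₃ k + 1 < 2 * k + t :=
      fun k hk => hroom (j - k - 1) k (by omega) hk.1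
    have hcard : ((G₁ ∩ G₂ ∩ G₃).erase j).card = N := by
      rw [Finset.card_erase_of_mem hj', hN]; rfl
    have hji : j ≠ i := by omega
    by_cases hi1m : i ∈ G₁
    · have hi2m : i ∉ G₂ := by
        intro h; simp [m, hi1m, h] at him; omega
      have hi3m : i ∉ G₃ := by
        intro h; simp [m, hi1m, h] at him
      obtain ⟨k, hkn, hk⟩ := ih G₁ h₁ _ (hS i j hi1 hij' hjn G₂ h₂ hj2 hi2m) G₃ h₃ (by
        rw [← hcard]; congr 1
        ext x; simp only [mem_inter, mem_insert, mem_erase]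
        constructor
        · rintro ⟨⟨h, rfl | h'⟩, h₃'⟩
          · exact absurd h₃' hi3m
          · tauto
        · tauto)
      rw [cnt_shift hi1 hij' hj2 hi2m] at hk
      have := hcon k hkn
      split_ifs at hk with hc
      · have := hroom' k hc; omega
      · omega
    · obtain ⟨k, hkn, hk⟩ := ih _ (hS i j hi1 hij' hjn G₁ h₁ hj1 hi1m) G₂ h₂ G₃ h₃ (by
        rw [← hcard]; congr 1
        ext x; simp only [mem_inter, mem_insert, mem_erase]
        constructor
        · rintro ⟨⟨rfl | h, h'⟩, h₃'⟩
          · simp [m, h', h₃'] at him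
          · tauto
        · tauto)
      rw [cnt_shift hi1 hij' hj1 hi1m] at hk
      have := hcon k hkn
      split_ifs at hk with hc
      · have := hroom' k hc; omega
      · omega

/-! ### A maximal inequality for the random walk -/

lemma Icc_one_succ (k : ℕ) : Finset.Icc 1 (k + 1) = insert (k + 1) (Finset.Icc 1 k) := by
  ext x; simp only [mem_Icc, mem_insert]; omega

lemma card_le_of_subset_Icc {X : Finset ℕ} {k : ℕ} (h : X ⊆ Finset.Icc 1 k) : X.card ≤ k := by
  simpa using Finset.card_le_card h

lemma notMem_of_subset_Icc {X : Finset ℕ} {k : ℕ} (h : X ⊆ Finset.Icc 1 k) : k + 1 ∉ X := by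
  intro hx; have := h hx; simp at this

/-- One step of the walk: the `p`-weighted sum over `2^[k+1]` conditions on the first `k` steps. -/
lemma sum_powerset_succ (p : ℝ) (k : ℕ) (f : Finset ℕ → ℝ) :
    ∑ X ∈ (Finset.Icc 1 (k + 1)).powerset, p ^ X.card * (1 - p) ^ (k + 1 - X.card) * f X =
    ∑ X ∈ (Finset.Icc 1 k).powerset, p ^ X.card * (1 - p) ^ (k - X.card) *
      (p * f (insert (k + 1) X) + (1 - p) * f X) := by
  rw [Icc_one_succ, Finset.sum_powerset_insert (by simp), ← Finset.sum_add_distrib]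
  apply Finset.sum_congr rfl
  intro X hX
  rw [Finset.mem_powerset] at hX
  have h1 := card_le_of_subset_Icc hX
  rw [Finset.card_insert_of_notMem (notMem_of_subset_Icc hX),
    show k + 1 - X.card = (k - X.card) + 1 by omega,
    show k + 1 - (X.card + 1) = k - X.card by omega]
  ring

/-- Ville's maximal inequality: if `Φ ≥ 0` is superharmonic along the walk as long as it
stays below `1`, and every `G ∈ A` reaches a state with `Φ ≥ 1`, then `μ_p(A) ≤ Φ(start)`. -/
lemma ville {p : ℝ} (hp : 0 ≤ p) (hp1 : p ≤ 1) {n : ℕ} {A : Finset (Finset ℕ)}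
    (hA : FamilyOn n A) (Φ : ℕ → Finset ℕ → ℝ)
    (h0 : ∀ k, ∀ X ⊆ Finset.Icc 1 k, 0 ≤ Φ k X)
    (hsup : ∀ k < n, ∀ X ⊆ Finset.Icc 1 k, Φ k X < 1 →
      p * Φ (k + 1) (insert (k + 1) X) + (1 - p) * Φ (k + 1) X ≤ Φ k X)
    (hhit : ∀ G ∈ A, ∃ k ≤ n, 1 ≤ Φ k (G ∩ Finset.Icc 1 k)) :
    mu p n A ≤ Φ 0 ∅ := by
  classical
  -- the process `Φ`, replaced by `1` from the first time it reaches `1`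
  let Hit : ℕ → Finset ℕ → Prop := fun j X => ∃ k ≤ j, 1 ≤ Φ k (X ∩ Finset.Icc 1 k)
  let Ψ : ℕ → Finset ℕ → ℝ := fun j X => if Hit j X then 1 else Φ j X
  have hΨ0 : ∀ j, ∀ X ⊆ Finset.Icc 1 j, 0 ≤ Ψ j X := by
    intro j X hX
    simp only [Ψ]; split_ifs
    · norm_num
    · exact h0 j X hX
  have hself : ∀ j, ∀ X ⊆ Finset.Icc 1 j, X ∩ Finset.Icc 1 j = X :=
    fun j X hX => Finset.inter_eq_left.2 hX
  have hΨle : ∀ j, ∀ X ⊆ Finset.Icc 1 (j+1), (¬ Hit j X) → Ψ (j+1) X ≤ Φ (j+1) X := by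
    intro j X hX hn
    simp only [Ψ]; split_ifs with hh
    · obtain ⟨k, hk, hk'⟩ := hh
      rcases Nat.lt_or_ge k (j+1) with hlt | hge
      · exact absurd ⟨k, by omega, hk'⟩ hn
      · have : k = j + 1 := by omega
        subst this
        rwa [hself _ _ hX] at hk'
    · exact le_rfl
  have hq : 0 ≤ 1 - p := by linarith
  have hmain : ∀ j ≤ n, ∑ X ∈ (Finset.Icc 1 j).powerset,
      p ^ X.card * (1 - p) ^ (j - X.card) * Ψ j X ≤ Φ 0 ∅ := by
    intro j
    induction j with
    | zero =>
      intro _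
      simp [Ψ]
      split_ifs with hh
      · obtain ⟨k, hk, hk'⟩ := hh
        obtain rfl : k = 0 := by omega
        simpa using hk'
      · exact le_rfl
    | succ j ih =>
      intro hj
      rw [sum_powerset_succ]
      refine le_trans (Finset.sum_le_sum ?_) (ih (by omega))
      intro X hX
      rw [Finset.mem_powerset] at hX
      apply mul_le_mul_of_nonneg_left _ (by positivity)
      have hX1 : X ⊆ Finset.Icc 1 (j+1) :=
        hX.trans (Finset.Icc_subset_Icc_right (by omega))
      have hX2 : insert (j+1) X ⊆ Finset.Icc 1 (j+1) := by
        rw [Icc_one_succ]; exact Finset.insert_subset_insert _ hX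
      have hins : ∀ k ≤ j, insert (j+1) X ∩ Finset.Icc 1 k = X ∩ Finset.Icc 1 k := by
        intro k hk
        exact Finset.insert_inter_of_notMem (by simp; omega)
      by_cases hh : Hit j X
      · have e1 : Hit (j+1) X := by
          obtain ⟨k, hk, hk'⟩ := hh; exact ⟨k, by omega, hk'⟩
        have e2 : Hit (j+1) (insert (j+1) X) := by
          obtain ⟨k, hk, hk'⟩ := hh
          exact ⟨k, by omega, by rw [hins k hk]; exact hk'⟩
        simp only [Ψ, if_pos hh, if_pos e1, if_pos e2]; linarith
      · have hh2 : ¬ Hit j (insert (j+1) X) := by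
          rintro ⟨k, hk, hk'⟩
          exact hh ⟨k, hk, by rwa [hins k hk] at hk'⟩
        have hlt : Φ j X < 1 := by
          by_contra hge
          exact hh ⟨j, le_rfl, by rw [hself j X hX]; exact not_lt.1 hge⟩
        have a1 := hΨle j X hX1 hh
        have a2 := hΨle j _ hX2 hh2
        have a3 := hsup j (by omega) X hX hlt
        have : Ψ j X = Φ j X := by simp only [Ψ, if_neg hh]
        rw [this]
        have b1 := mul_le_mul_of_nonneg_left a1 hq
        have b2 := mul_le_mul_of_nonneg_left a2 hp
        linarith
  refine le_trans ?_ (hmain n le_rfl)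
  have hsub : A ⊆ (Finset.Icc 1 n).powerset := fun G hG => Finset.mem_powerset.2 (hA G hG)
  refine le_trans ?_ (Finset.sum_le_sum_of_subset_of_nonneg hsub ?_)
  · unfold mu
    apply Finset.sum_le_sum
    intro G hG
    have : Ψ n G = 1 := by simp only [Ψ]; rw [if_pos (hhit G hG)]
    rw [this, mul_one]
  · intro X hX _
    rw [Finset.mem_powerset] at hX
    have := hΨ0 n X hX
    positivity

/-- `contProb p m T k X` is the conditional probability, given that the first `k ≤ m` steps of the walk
are described by `X`, that the first `m` steps are described by a member of `T`. -/
noncomputable def contProb (p : ℝ) (m : ℕ) (T : Finset (Finset ℕ)) (k : ℕ) (X : Finset ℕ) : ℝ :=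
  ∑ Y ∈ T.filter (fun Y => Y ∩ Finset.Icc 1 k = X),
    p ^ (Y.card - X.card) * (1 - p) ^ ((m - k) - (Y.card - X.card))

lemma contProb_nonneg {p : ℝ} (hp : 0 ≤ p) (hp1 : p ≤ 1) (m : ℕ) (T : Finset (Finset ℕ)) (k : ℕ)
    (X : Finset ℕ) : 0 ≤ contProb p m T k X := by
  have : 0 ≤ 1 - p := by linarith
  unfold contProb; positivity

lemma contProb_zero (p : ℝ) (m : ℕ) (T : Finset (Finset ℕ)) :
    contProb p m T 0 ∅ = ∑ Y ∈ T, p ^ Y.card * (1 - p) ^ (m - Y.card) := by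
  simp [contProb]

lemma contProb_top (p : ℝ) {m : ℕ} {T : Finset (Finset ℕ)} (hT : ∀ Y ∈ T, Y ⊆ Finset.Icc 1 m)
    {X : Finset ℕ} (hX : X ∈ T) : contProb p m T m X = 1 := by
  have : T.filter (fun Y => Y ∩ Finset.Icc 1 m = X) = {X} := by
    ext Y
    simp only [mem_filter, mem_singleton]
    constructor
    · rintro ⟨h1, h2⟩; rwa [Finset.inter_eq_left.2 (hT Y h1)] at h2
    · rintro rfl; exact ⟨hX, Finset.inter_eq_left.2 (hT Y hX)⟩
  unfold contProb
  rw [this]; simp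

lemma inter_Icc_succ_eq_iff {Y X : Finset ℕ} {k : ℕ} (hX : X ⊆ Finset.Icc 1 k) :
    Y ∩ Finset.Icc 1 k = X ↔
      (Y ∩ Finset.Icc 1 (k+1) = insert (k+1) X ∨ Y ∩ Finset.Icc 1 (k+1) = X) := by
  have hk := notMem_of_subset_Icc hX
  rw [Icc_one_succ]
  by_cases h : k + 1 ∈ Y
  · rw [Finset.inter_insert_of_mem h]
    constructor
    · rintro rfl; exact Or.inl rfl
    · rintro (h1 | h1)
      · have := congrArg (fun Z => Z.erase (k+1)) h1
        simpa [Finset.erase_insert hk] using this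
      · exact absurd (h1 ▸ Finset.mem_insert_self _ _) hk
  · rw [Finset.inter_insert_of_notMem h]
    constructor
    · exact Or.inr
    · rintro (h1 | h1)
      · have : k + 1 ∈ Y ∩ Finset.Icc 1 k := h1 ▸ Finset.mem_insert_self _ _
        simp at this
      · exact h1

lemma contProb_step (p : ℝ) {m : ℕ} {T : Finset (Finset ℕ)} (hT : ∀ Y ∈ T, Y ⊆ Finset.Icc 1 m)
    {k : ℕ} (hk : k < m) {X : Finset ℕ} (hX : X ⊆ Finset.Icc 1 k) :
    p * contProb p m T (k+1) (insert (k+1) X) + (1 - p) * contProb p m T (k+1) X = contProb p m T k X := by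
  have hkX := notMem_of_subset_Icc hX
  have hsplit : T.filter (fun Y => Y ∩ Finset.Icc 1 k = X) =
      T.filter (fun Y => Y ∩ Finset.Icc 1 (k+1) = insert (k+1) X) ∪
      T.filter (fun Y => Y ∩ Finset.Icc 1 (k+1) = X) := by
    rw [← Finset.filter_or]
    apply Finset.filter_congr
    intro Y _
    exact inter_Icc_succ_eq_iff hX
  have hdisj : Disjoint (T.filter (fun Y => Y ∩ Finset.Icc 1 (k+1) = insert (k+1) X))
      (T.filter (fun Y => Y ∩ Finset.Icc 1 (k+1) = X)) := by
    rw [Finset.disjoint_filter]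
    intro Y _ h1 h2
    exact hkX (h2 ▸ h1 ▸ Finset.mem_insert_self _ _)
  have hcard : ∀ Y ∈ T, ∀ k ≤ m, Y.card ≤ (Y ∩ Finset.Icc 1 k).card + (m - k) := by
    intro Y hY k hk
    have h1 : Y.card = cnt Y m := by unfold cnt; rw [Finset.inter_eq_left.2 (hT Y hY)]
    have := cnt_lip Y hk
    rw [← h1] at this; exact this
  unfold contProb
  rw [hsplit, Finset.sum_union hdisj, Finset.mul_sum, Finset.mul_sum]
  congr 1
  · apply Finset.sum_congr rfl
    intro Y hY
    rw [mem_filter] at hY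
    have h1 : (insert (k+1) X).card ≤ Y.card := by
      rw [← hY.2]; exact Finset.card_le_card Finset.inter_subset_left
    rw [Finset.card_insert_of_notMem hkX] at h1 ⊢
    rw [show Y.card - X.card = (Y.card - (X.card + 1)) + 1 by omega,
      show m - k - (Y.card - (X.card + 1) + 1) = m - (k+1) - (Y.card - (X.card + 1)) by omega]
    ring
  · apply Finset.sum_congr rfl
    intro Y hY
    rw [mem_filter] at hY
    have h2 := hcard Y hY.1 (k+1) hk
    rw [hY.2] at h2
    rw [show m - k - (Y.card - X.card) = (m - (k+1) - (Y.card - X.card)) + 1 by omega]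
    ring

/-- A family all of whose members have their trace on `[m]` in `T` has measure at most that
of `T` as a family on `[m]`. -/
lemma mu_le_trace {p : ℝ} (hp : 0 ≤ p) (hp1 : p ≤ 1) {n m : ℕ} (hmn : m ≤ n)
    {A T : Finset (Finset ℕ)} (hA : FamilyOn n A) (hT : ∀ Y ∈ T, Y ⊆ Finset.Icc 1 m)
    (h : ∀ G ∈ A, G ∩ Finset.Icc 1 m ∈ T) :
    mu p n A ≤ ∑ Y ∈ T, p ^ Y.card * (1 - p) ^ (m - Y.card) := by
  rw [← contProb_zero]
  have key := ville hp hp1 hA (fun k X => if k ≤ m then contProb p m T k X else 0) ?_ ?_ ?_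
  · simpa using key
  · intro k X _
    split_ifs
    · exact contProb_nonneg hp hp1 _ _ _ _
    · exact le_rfl
  · intro k _ X hX _
    rcases Nat.lt_or_ge k m with hkm | hkm
    · rw [if_pos (by omega), if_pos (by omega), if_pos (by omega), contProb_step p hT hkm hX]
    · rw [if_neg (by omega), if_neg (by omega)]
      simp only [mul_zero, add_zero]
      split_ifs
      · exact contProb_nonneg hp hp1 _ _ _ _
      · exact le_rfl
  · intro G hG
    refine ⟨m, hmn, ?_⟩
    rw [if_pos le_rfl, contProb_top p hT (h G hG)]

/-! ### Hitting probabilities -/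

/-- The martingale `α^(c - (y - 2x))` of the walk, where `y = |X|` and `x = k - |X|`; it bounds the
probability of hitting the line `y = 2x + c`. -/
noncomputable def steep (a : ℝ) (c : ℤ) (k : ℕ) (X : Finset ℕ) : ℝ :=
  a ^ (c + 2 * (k : ℤ) - 3 * (X.card : ℤ))

/-- The martingale `(p/q)^(c - (y - x))` of the walk, written with `r = p/q`; it bounds the
probability of hitting the line `y = x + c`. -/
noncomputable def flat (r : ℝ) (c : ℤ) (k : ℕ) (X : Finset ℕ) : ℝ :=
  r ^ (c + (k : ℤ) - 2 * (X.card : ℤ))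

lemma steep_up {a : ℝ} (ha : 0 < a) (c : ℤ) {k : ℕ} {X : Finset ℕ} (hX : X ⊆ Finset.Icc 1 k) :
    steep a c (k+1) (insert (k+1) X) = steep a c k X * a⁻¹ := by
  unfold steep
  rw [Finset.card_insert_of_notMem (notMem_of_subset_Icc hX), ← zpow_sub_one₀ ha.ne']
  congr 1; push_cast; ring

lemma steep_right {a : ℝ} (ha : 0 < a) (c : ℤ) (k : ℕ) (X : Finset ℕ) :
    steep a c (k+1) X = steep a c k X * a ^ 2 := by
  unfold steep
  rw [← zpow_natCast, ← zpow_add₀ ha.ne']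
  congr 1; push_cast; ring

lemma steep_step {p a : ℝ} (ha : 0 < a) (hpa : p = (1 - p) * (a + a ^ 2)) (c : ℤ) {k : ℕ}
    {X : Finset ℕ} (hX : X ⊆ Finset.Icc 1 k) :
    p * steep a c (k+1) (insert (k+1) X) + (1 - p) * steep a c (k+1) X = steep a c k X := by
  rw [steep_up ha c hX, steep_right ha]
  have h : p * a⁻¹ + (1 - p) * a ^ 2 = 1 := by
    field_simp
    linear_combination (1 - a) * hpa
  linear_combination (steep a c k X) * h

lemma flat_step {p r : ℝ} (hr : 0 < r) (hpr : p = (1 - p) * r) (c : ℤ) {k : ℕ}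
    {X : Finset ℕ} (hX : X ⊆ Finset.Icc 1 k) :
    p * flat r c (k+1) (insert (k+1) X) + (1 - p) * flat r c (k+1) X = flat r c k X := by
  have h1 : flat r c (k+1) (insert (k+1) X) = flat r c k X * r⁻¹ := by
    unfold flat
    rw [Finset.card_insert_of_notMem (notMem_of_subset_Icc hX), ← zpow_sub_one₀ hr.ne']
    congr 1; push_cast; ring
  have h2 : flat r c (k+1) X = flat r c k X * r := by
    unfold flat
    rw [← zpow_add_one₀ hr.ne']
    congr 1; push_cast; ring
  rw [h1, h2]
  have h : p * r⁻¹ + (1 - p) * r = 1 := by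
    field_simp
    linear_combination (1 - r) * hpr
  linear_combination (flat r c k X) * h

lemma steep_pos {a : ℝ} (ha : 0 < a) (c : ℤ) (k : ℕ) (X : Finset ℕ) : 0 < steep a c k X :=
  zpow_pos ha _

lemma flat_pos {a : ℝ} (ha : 0 < a) (c : ℤ) (k : ℕ) (X : Finset ℕ) : 0 < flat a c k X :=
  zpow_pos ha _

lemma one_le_steep {a : ℝ} (ha : 0 < a) (ha1 : a ≤ 1) {c : ℤ} {k : ℕ} {X : Finset ℕ}
    (h : c + 2 * (k : ℤ) ≤ 3 * (X.card : ℤ)) : 1 ≤ steep a c k X :=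
  one_le_zpow_of_nonpos₀ ha ha1 (by omega)

lemma one_le_flat {a : ℝ} (ha : 0 < a) (ha1 : a ≤ 1) {c : ℤ} {k : ℕ} {X : Finset ℕ}
    (h : c + (k : ℤ) ≤ 2 * (X.card : ℤ)) : 1 ≤ flat a c k X :=
  one_le_zpow_of_nonpos₀ ha ha1 (by omega)

/-- Every member of `A` hits the line `y = 2x + t + 1`, or passes through `(s, t + 2s)` with its
first `t + 3s` steps in `T₁`, or does so with its first `t + 3s` steps in `T₂` and then
hits `y = x + t + s + 1`. From `(s, t + 2s)` the first line is hit with probability `α` and the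
second one with probability `p/q = α + α²`, whence the factors `1 - α` and `α²`. -/
lemma mu_le_point {p a : ℝ} (hp : 0 < p) (hp1 : p < 1) (ha : 0 < a)
    (hpa : p = (1 - p) * (a + a ^ 2)) (hr1 : a + a ^ 2 ≤ 1) {n t s : ℕ}
    {A T₁ T₂ : Finset (Finset ℕ)} (hA : FamilyOn n A)
    (hT₁ : ∀ Y ∈ T₁, Y ⊆ Finset.Icc 1 (t + 3 * s) ∧ Y.card = t + 2 * s)
    (hT₂ : ∀ Y ∈ T₂, Y ⊆ Finset.Icc 1 (t + 3 * s) ∧ Y.card = t + 2 * s)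
    (h : ∀ G ∈ A, (∃ k ≤ n, 2 * k + t + 1 ≤ 3 * cnt G k) ∨
      (t + 3 * s ≤ n ∧ G ∩ Finset.Icc 1 (t + 3 * s) ∈ T₁) ∨
      (G ∩ Finset.Icc 1 (t + 3 * s) ∈ T₂ ∧
        ∃ k ≤ n, t + 3 * s < k ∧ k + t + s + 1 ≤ 2 * cnt G k)) :
    mu p n A ≤ a ^ (t + 1) +
      p ^ t * (p ^ 2 * (1 - p)) ^ s * ((1 - a) * T₁.card + a ^ 2 * T₂.card) := by
  set m := t + 3 * s with hm
  set r := a + a ^ 2 with hr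
  have hr0 : 0 < r := by positivity
  have ha1 : a ≤ 1 := by nlinarith
  have hT₁' : ∀ Y ∈ T₁, Y ⊆ Finset.Icc 1 m := fun Y hY => (hT₁ Y hY).1
  have hT₂' : ∀ Y ∈ T₂, Y ⊆ Finset.Icc 1 m := fun Y hY => (hT₂ Y hY).1
  let B : ℕ → Finset ℕ → ℝ := fun k X => steep a (t + 1) k X +
    ((1 - a) * contProb p m T₁ k X + a ^ 2 * contProb p m T₂ k X)
  let Φ : ℕ → Finset ℕ → ℝ := fun k X =>
    if k ≤ m then B k X
    else if X ∩ Finset.Icc 1 m ∈ T₂ then flat r (t + s + 1) k X else steep a (t + 1) k X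
  have hw0 : ∀ k X, 0 ≤ (1 - a) * contProb p m T₁ k X + a ^ 2 * contProb p m T₂ k X := by
    intro k X
    have h1 := contProb_nonneg hp.le hp1.le m T₁ k X
    have h2 := contProb_nonneg hp.le hp1.le m T₂ k X
    have : 0 ≤ 1 - a := by linarith
    positivity
  have hsteepm : ∀ Y : Finset ℕ, Y.card = t + 2 * s → steep a (t + 1) m Y = a := by
    intro Y hY
    unfold steep
    rw [hY, hm]
    have : ((t : ℤ) + 1 + 2 * ((t + 3 * s : ℕ) : ℤ) - 3 * ((t + 2 * s : ℕ) : ℤ)) = 1 := by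
      push_cast; ring
    rw [this, zpow_one]
  have hflatm : ∀ Y : Finset ℕ, Y.card = t + 2 * s → flat r (t + s + 1) m Y = r := by
    intro Y hY
    unfold flat
    rw [hY, hm]
    have : ((t : ℤ) + s + 1 + ((t + 3 * s : ℕ) : ℤ) - 2 * ((t + 2 * s : ℕ) : ℤ)) = 1 := by
      push_cast; ring
    rw [this, zpow_one]
  have key := ville hp.le hp1.le hA Φ ?_ ?_ ?_
  · refine key.trans (le_of_eq ?_)
    have hsum : ∀ T : Finset (Finset ℕ), (∀ Y ∈ T, Y ⊆ Finset.Icc 1 m ∧ Y.card = t + 2 * s) →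
        contProb p m T 0 ∅ = T.card * (p ^ t * (p ^ 2 * (1 - p)) ^ s) := by
      intro T hT
      rw [contProb_zero, Finset.sum_congr rfl (g := fun _ => p ^ t * (p ^ 2 * (1 - p)) ^ s)]
      · simp
      · intro Y hY
        rw [(hT Y hY).2, hm, show t + 3 * s - (t + 2 * s) = s by omega, mul_pow, pow_add, pow_mul]
        ring
    simp only [Φ, B, Nat.zero_le, if_true]
    rw [hsum T₁ hT₁, hsum T₂ hT₂]
    have : steep a (t + 1) 0 ∅ = a ^ (t + 1) := by
      unfold steep
      rw [← zpow_natCast]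
      congr 1
    rw [this]; ring
  · intro k X _
    simp only [Φ, B]
    split_ifs
    · have := steep_pos ha (t + 1) k X
      have := hw0 k X
      linarith
    · exact (flat_pos hr0 _ _ _).le
    · exact (steep_pos ha _ _ _).le
  · intro k _ X hX _
    have hins : m ≤ k → insert (k+1) X ∩ Finset.Icc 1 m = X ∩ Finset.Icc 1 m := by
      intro hk
      exact Finset.insert_inter_of_notMem (by simp; omega)
    have hst := steep_step ha hpa (t + 1) hX
    have hfl := flat_step hr0 hpa (t + s + 1) hX
    rcases Nat.lt_or_ge k m with hkm | hkm
    · simp only [Φ, B]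
      rw [if_pos (by omega), if_pos (by omega), if_pos (by omega)]
      have e1 := contProb_step p hT₁' hkm hX
      have e2 := contProb_step p hT₂' hkm hX
      apply le_of_eq
      linear_combination hst + (1 - a) * e1 + a ^ 2 * e2
    · simp only [Φ]
      have hk1 : ¬ k + 1 ≤ m := by omega
      rw [if_neg hk1, if_neg hk1, hins hkm]
      rcases Nat.lt_or_ge m k with hlt | hge
      · rw [if_neg (show ¬ k ≤ m by omega)]
        split_ifs
        · exact hfl.le
        · exact hst.le
      · obtain rfl : k = m := by omega
        rw [if_pos le_rfl, Finset.inter_eq_left.2 hX]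
        simp only [B]
        split_ifs with hX2
        · rw [hfl, hflatm X (hT₂ X hX2).2, hsteepm X (hT₂ X hX2).2, contProb_top p hT₂' hX2]
          have h1 := contProb_nonneg hp.le hp1.le m T₁ m X
          have : 0 ≤ (1 - a) * contProb p m T₁ m X := mul_nonneg (by linarith) h1
          linarith
        · rw [hst]
          have := hw0 m X
          linarith
  · intro G hG
    rcases h G hG with ⟨k, hk, hk'⟩ | ⟨hmn, hG1⟩ | ⟨hG2, k, hk, hmk, hk'⟩
    · refine ⟨k, hk, ?_⟩
      have hc : (2 * k + t + 1 : ℤ) ≤ 3 * ((G ∩ Finset.Icc 1 k).card : ℤ) := by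
        exact_mod_cast hk'
      have hs : 1 ≤ steep a (t + 1) k (G ∩ Finset.Icc 1 k) := one_le_steep ha ha1 (by linarith)
      simp only [Φ, B]
      split_ifs with h1 h2
      · have := hw0 k (G ∩ Finset.Icc 1 k); linarith
      · refine one_le_flat hr0 hr1 ?_
        have : m < k := by omega
        have : (t : ℤ) + 3 * s + 1 ≤ k := by omega
        omega
      · exact hs
    · refine ⟨m, hmn, ?_⟩
      simp only [Φ, B]
      rw [if_pos le_rfl, hsteepm _ (hT₁ _ hG1).2, contProb_top p hT₁' hG1]
      have h1 := contProb_nonneg hp.le hp1.le m T₂ m (G ∩ Finset.Icc 1 m)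
      have : 0 ≤ a ^ 2 * contProb p m T₂ m (G ∩ Finset.Icc 1 m) := by positivity
      linarith
    · refine ⟨k, hk, ?_⟩
      simp only [Φ]
      rw [if_neg (by omega), inter_Icc_inter G (by omega), if_pos hG2]
      refine one_le_flat hr0 hr1 ?_
      have hc : (k + t + s + 1 : ℤ) ≤ 2 * ((G ∩ Finset.Icc 1 k).card : ℤ) := by
        exact_mod_cast hk'
      linarith

/-- Every member of `A` hits the line `y = 2x + t + 1` or hits the line `y = 2x + t` twice. Between
two visits to the latter line that avoid the former, the walk steps right and then climbs by `2`
relative to the slope, which has probability `q α²`. -/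
lemma mu_le_twice {p a : ℝ} (hp : 0 < p) (hp1 : p < 1) (ha : 0 < a)
    (hpa : p = (1 - p) * (a + a ^ 2)) (hr1 : a + a ^ 2 ≤ 1) {n t : ℕ}
    {A : Finset (Finset ℕ)} (hA : FamilyOn n A)
    (h : ∀ G ∈ A, (∃ k ≤ n, 2 * k + t + 1 ≤ 3 * cnt G k) ∨
      ∃ j k, j < k ∧ k ≤ n ∧ 3 * cnt G j = 2 * j + t ∧ 3 * cnt G k = 2 * k + t) :
    mu p n A ≤ a ^ (t + 1) + (1 - a) * ((1 - p) * a ^ 2) * a ^ t := by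
  classical
  have ha1 : a ≤ 1 := by nlinarith
  have hq : 0 ≤ 1 - p := by linarith
  have hb : 0 ≤ 1 - a := by linarith
  let Bef : ℕ → Finset ℕ → Prop := fun k X => ∃ j < k, 3 * cnt X j = 2 * j + t
  let w : ℕ → Finset ℕ → ℝ := fun k X => if Bef k X then 1 else (1 - p) * a ^ 2
  let Φ : ℕ → Finset ℕ → ℝ := fun k X => steep a (t + 1) k X +
    if 3 * X.card ≤ 2 * k + t then (1 - a) * (w k X * steep a t k X) else 0
  have hw0 : ∀ k X, 0 ≤ w k X := by
    intro k X; simp only [w]; split_ifs <;> positivity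
  have he0 : ∀ k X, 0 ≤ if 3 * X.card ≤ 2 * k + t then (1 - a) * (w k X * steep a t k X) else 0 := by
    intro k X
    have h1 := steep_pos ha t k X
    have h2 := hw0 k X
    split_ifs <;> positivity
  have key := ville hp.le hp1.le hA Φ ?_ ?_ ?_
  · refine key.trans (le_of_eq ?_)
    have hB : ¬ Bef 0 ∅ := by rintro ⟨j, hj, _⟩; omega
    have e1 : steep a (t + 1) 0 ∅ = a ^ (t + 1) := by
      unfold steep; rw [← zpow_natCast]; congr 1
    have e2 : steep a t 0 ∅ = a ^ t := by
      unfold steep; rw [← zpow_natCast]; congr 1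
    simp only [Φ, w, if_neg hB, e1, e2]
    rw [if_pos (by simp)]
    ring
  · intro k X _
    have := steep_pos ha (t + 1) k X
    have := he0 k X
    simp only [Φ]
    linarith
  · intro k _ X hX hlt
    have hcardX : cnt X k = X.card := by unfold cnt; rw [Finset.inter_eq_left.2 hX]
    have hkX := notMem_of_subset_Icc hX
    have hcI : (insert (k+1) X).card = X.card + 1 := Finset.card_insert_of_notMem hkX
    have hcins : ∀ j ≤ k, cnt (insert (k+1) X) j = cnt X j := by
      intro j hj; unfold cnt
      rw [Finset.insert_inter_of_notMem (by simp; omega)]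
    have hBins : Bef (k+1) (insert (k+1) X) ↔ Bef (k+1) X := by
      constructor
      · rintro ⟨j, hj, h⟩; exact ⟨j, hj, by rwa [hcins j (by omega)] at h⟩
      · rintro ⟨j, hj, h⟩; exact ⟨j, hj, by rwa [hcins j (by omega)]⟩
    have hBsucc : Bef (k+1) X ↔ Bef k X ∨ 3 * X.card = 2 * k + t := by
      constructor
      · rintro ⟨j, hj, h⟩
        rcases Nat.lt_or_ge j k with hjk | hjk
        · exact Or.inl ⟨j, hjk, h⟩
        · obtain rfl : j = k := by omega
          right; rw [← hcardX]; exact h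
      · rintro (⟨j, hj, h⟩ | h)
        · exact ⟨j, by omega, h⟩
        · exact ⟨k, by omega, by rw [hcardX]; exact h⟩
    have hwins : w (k+1) (insert (k+1) X) = w (k+1) X := by simp only [w, hBins]
    -- below `1` the walk has not crossed the line `y = 2x + t`
    have hle : 3 * X.card ≤ 2 * k + t := by
      by_contra hgt
      have : 1 ≤ steep a (t + 1) k X := one_le_steep ha ha1 (by omega)
      have := he0 k X
      simp only [Φ] at hlt
      linarith
    have hst1 := steep_step ha hpa (t + 1) hX
    have hst := steep_step ha hpa t hX
    have hp' := steep_pos ha t (k+1) (insert (k+1) X)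
    simp only [Φ]
    rw [if_pos hle, if_pos (show 3 * X.card ≤ 2 * (k + 1) + t by omega), hcI, hwins]
    by_cases hBk : Bef k X ∨ 3 * X.card < 2 * k + t
    · have hww : w (k+1) X = w k X := by
        simp only [w, hBsucc]
        rcases hBk with h | h
        · simp [h]
        · have : 3 * X.card ≠ 2 * k + t := by omega
          simp [this]
      rw [hww]
      have hle' : (if 3 * (X.card + 1) ≤ 2 * (k + 1) + t then
          (1 - a) * (w k X * steep a t (k+1) (insert (k+1) X)) else 0) ≤
          (1 - a) * (w k X * steep a t (k+1) (insert (k+1) X)) := by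
        have := hw0 k X
        split_ifs
        · exact le_rfl
        · positivity
      have := mul_le_mul_of_nonneg_left hle' hp.le
      have e : (1 - a) * (w k X * steep a t k X) = p * ((1 - a) * (w k X *
          steep a t (k+1) (insert (k+1) X))) + (1 - p) * ((1 - a) * (w k X *
          steep a t (k+1) X)) := by
        rw [← hst]; ring
      rw [e]
      linarith
    · push Not at hBk
      have heq : 3 * X.card = 2 * k + t := by omega
      rw [if_neg (by omega)]
      have h1 : w (k+1) X = 1 := by
        simp only [w]; rw [if_pos (hBsucc.2 (Or.inr heq))]
      have h2 : w k X = (1 - p) * a ^ 2 := by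
        simp only [w]; rw [if_neg hBk.1]
      rw [h1, h2, steep_right ha t k X]
      apply le_of_eq
      linear_combination hst1
  · intro G hG
    rcases h G hG with ⟨k, hk, hk'⟩ | ⟨j, k, hjk, hk, hj', hk'⟩
    · refine ⟨k, hk, ?_⟩
      have hc : (2 * k + t + 1 : ℤ) ≤ 3 * ((G ∩ Finset.Icc 1 k).card : ℤ) := by
        exact_mod_cast hk'
      have hs : 1 ≤ steep a (t + 1) k (G ∩ Finset.Icc 1 k) := one_le_steep ha ha1 (by linarith)
      have := he0 k (G ∩ Finset.Icc 1 k)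
      simp only [Φ]
      linarith
    · refine ⟨k, hk, ?_⟩
      have hB : Bef k (G ∩ Finset.Icc 1 k) := ⟨j, hjk, by rw [cnt_inter G hjk.le]; exact hj'⟩
      have hc : 3 * (G ∩ Finset.Icc 1 k).card = 2 * k + t := hk'
      have e1 : steep a t k (G ∩ Finset.Icc 1 k) = 1 := by
        unfold steep
        rw [show (t : ℤ) + 2 * k - 3 * ((G ∩ Finset.Icc 1 k).card : ℤ) = 0 by omega, zpow_zero]
      have e2 : steep a (t + 1) k (G ∩ Finset.Icc 1 k) = a := by
        unfold steep
        rw [show (t : ℤ) + 1 + 2 * k - 3 * ((G ∩ Finset.Icc 1 k).card : ℤ) = 1 by omega, zpow_one]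
      simp only [Φ, w]
      rw [if_pos hc.le, if_pos hB, e1, e2]
      linarith

/-! ### A ballot count -/

/-- The ballot number: the number of lattice paths with `a` right and `b` up steps that end on a
line of slope `2` without ever crossing it. -/
noncomputable def ballot (a b : ℕ) : ℝ := ((a + b).choose a : ℝ) * (b + 1 - 2 * a) / (b + 1)

lemma ballot_rec (a b : ℕ) : ballot (a + 1) (b + 1) = ballot (a + 1) b + ballot a (b + 1) := by
  unfold ballot
  have h1 : ((a + 1 + (b + 1)).choose (a + 1) : ℝ) =
      ((a + (b + 1)).choose a : ℝ) + ((a + 1 + b).choose (a + 1) : ℝ) := by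
    rw [show a + 1 + (b + 1) = (a + b + 1) + 1 by ring, Nat.choose_succ_succ,
      show a + (b + 1) = a + b + 1 by ring, show a + 1 + b = a + b + 1 by ring]
    push_cast; ring
  have h2 : ((a + 1 + b).choose (a + 1) : ℝ) * (a + 1) = ((a + (b + 1)).choose a : ℝ) * (b + 1) := by
    have := Nat.choose_succ_right_eq (a + b + 1) a
    rw [show a + b + 1 - a = b + 1 by omega] at this
    rw [show a + (b + 1) = a + b + 1 by ring, show a + 1 + b = a + b + 1 by ring]
    exact_mod_cast this
  rw [h1]
  set Q : ℝ := ((a + (b + 1)).choose a : ℝ)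
  set P : ℝ := ((a + 1 + b).choose (a + 1) : ℝ)
  have hP : P = Q * (b + 1) / (a + 1) := by field_simp; linarith
  rw [hP]
  push_cast
  field_simp
  ring

/-- The descriptions `Y ⊆ [t+3s]` of the walks from the origin to `(s, t+2s)` that never cross the
line `y = 2x + t`. -/
noncomputable def below (t s : ℕ) : Finset (Finset ℕ) :=
  (Finset.powersetCard (t + 2 * s) (Finset.Icc 1 (t + 3 * s))).filter
    (fun Y => ∀ k ≤ t + 3 * s, 3 * cnt Y k ≤ 2 * k + t)

lemma below_aux (t s : ℕ) : ∀ j k : ℕ, ∀ X ⊆ Finset.Icc 1 k, k + j = t + 3 * s →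
    ∀ a b, a + b = j → X.card + b = t + 2 * s → 2 * a ≤ b + 1 →
    (((below t s).filter (fun Y => Y ∩ Finset.Icc 1 k = X)).card : ℝ) ≤ ballot a b := by
  intro j
  induction j with
  | zero =>
    intro k X hX hk a b hab _ _
    obtain rfl : a = 0 := by omega
    obtain rfl : b = 0 := by omega
    have : (below t s).filter (fun Y => Y ∩ Finset.Icc 1 k = X) ⊆ {X} := by
      intro Y hY
      simp only [below, mem_filter, mem_powersetCard] at hY
      rw [mem_singleton, ← hY.2, show k = t + 3 * s by omega, Finset.inter_eq_left.2 hY.1.1.1]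
    have := Finset.card_le_card this
    rw [card_singleton] at this
    simp only [ballot]
    norm_num
    exact this
  | succ j ih =>
    intro k X hX hk a b hab hXb hle
    rcases Nat.lt_or_ge b (2 * a) with hgt | hle'
    · -- `X` itself has crossed the line
      have he : (below t s).filter (fun Y => Y ∩ Finset.Icc 1 k = X) = ∅ := by
        rw [Finset.filter_eq_empty_iff]
        intro Y hY hYX
        simp only [below, mem_filter] at hY
        have := hY.2 k (by omega)
        unfold cnt at this
        rw [hYX] at this
        omega
      rw [he]
      have : (b : ℝ) + 1 - 2 * a = 0 := by
        have : b + 1 = 2 * a := by omega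
        have : (b : ℝ) + 1 = 2 * a := by exact_mod_cast this
        linarith
      simp [ballot, this]
    · obtain ⟨b, rfl⟩ : ∃ b', b = b' + 1 := ⟨b - 1, by omega⟩
      have hX1 : X ⊆ Finset.Icc 1 (k+1) := hX.trans (Finset.Icc_subset_Icc_right (by omega))
      have hX2 : insert (k+1) X ⊆ Finset.Icc 1 (k+1) := by
        rw [Icc_one_succ]; exact Finset.insert_subset_insert _ hX
      have hci : (insert (k+1) X).card = X.card + 1 :=
        Finset.card_insert_of_notMem (notMem_of_subset_Icc hX)
      have hsub : (below t s).filter (fun Y => Y ∩ Finset.Icc 1 k = X) ⊆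
          (below t s).filter (fun Y => Y ∩ Finset.Icc 1 (k+1) = insert (k+1) X) ∪
          (below t s).filter (fun Y => Y ∩ Finset.Icc 1 (k+1) = X) := by
        rw [← Finset.filter_or]
        intro Y hY
        rw [mem_filter] at hY ⊢
        exact ⟨hY.1, (inter_Icc_succ_eq_iff hX).1 hY.2⟩
      have hcard : (((below t s).filter (fun Y => Y ∩ Finset.Icc 1 k = X)).card : ℝ) ≤
          ((below t s).filter (fun Y => Y ∩ Finset.Icc 1 (k+1) = insert (k+1) X)).card +
          ((below t s).filter (fun Y => Y ∩ Finset.Icc 1 (k+1) = X)).card := by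
        exact_mod_cast (Finset.card_le_card hsub).trans (Finset.card_union_le _ _)
      have h1 := ih (k+1) _ hX2 (by omega) a b (by omega) (by omega) (by omega)
      cases a with
      | zero =>
        have he : (below t s).filter (fun Y => Y ∩ Finset.Icc 1 (k+1) = X) = ∅ := by
          rw [Finset.filter_eq_empty_iff]
          intro Y hY hYX
          simp only [below, mem_filter, mem_powersetCard] at hY
          have h2 := cnt_lip Y (show k + 1 ≤ t + 3 * s by omega)
          unfold cnt at h2
          rw [hYX, Finset.inter_eq_left.2 hY.1.1] at h2
          omega
        rw [he, card_empty] at hcard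
        have e0 (c : ℕ) : ballot 0 c = 1 := by
          have : (c : ℝ) + 1 ≠ 0 := by positivity
          simp [ballot, this]
        have e1 := e0 b
        have e2 := e0 (b + 1)
        rw [e1] at h1; rw [e2]
        push_cast at hcard
        linarith
      | succ a =>
        have h2 := ih (k+1) _ hX1 (by omega) a (b+1) (by omega) (by omega) (by omega)
        rw [ballot_rec]
        linarith

lemma card_below (t s : ℕ) : ((below t s).card : ℝ) ≤ ballot s (t + 2 * s) := by
  have h := below_aux t s (t + 3 * s) 0 ∅ (by simp) (by omega) s (t + 2 * s) (by omega) (by simp)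
    (by omega)
  simpa using h

/-! ### Numerical estimates -/

lemma p_quad {t : ℕ} {p : ℝ} (ht : 15 ≤ t) (hp : 0 < p) (hpp : p ≤ p0 t) :
    (t + 2) * p ^ 2 ≤ 1 + p := by
  unfold p0 at hpp
  have htr : (15 : ℝ) ≤ t := by exact_mod_cast ht
  set r := Real.sqrt (4 * t + 9) with hr
  have hr2 : r ^ 2 = 4 * t + 9 := Real.sq_sqrt (by linarith)
  have hr1 : 1 < r := by
    rw [hr]; apply Real.lt_sqrt_of_sq_lt; linarith
  rw [le_div_iff₀ (by linarith)] at hpp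
  have h1 : p * r ≤ 2 + p := by linarith
  have h2 : (p * r) ^ 2 ≤ (2 + p) ^ 2 := by
    apply pow_le_pow_left₀ (by positivity) h1
  rw [mul_pow, hr2] at h2
  nlinarith

lemma p_lt {t : ℕ} {p : ℝ} (ht : 15 ≤ t) (hp : 0 < p) (h : (t + 2) * p ^ 2 ≤ 1 + p) :
    p < 0.2738 := by
  have htr : (15 : ℝ) ≤ t := by exact_mod_cast ht
  by_contra hge
  push Not at hge
  nlinarith [mul_le_mul_of_nonneg_right htr (sq_nonneg p)]

/-- `α(p)` is the positive root of `q (x + x²) = p`. -/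
lemma alpha_spec {p : ℝ} (hp : 0 < p) (hp1 : p < 1) :
    0 < alpha p ∧ p = (1 - p) * (alpha p + alpha p ^ 2) := by
  have hq : 0 < 1 - p := by linarith
  unfold alpha
  set r := Real.sqrt ((1 + 3 * p) / (1 - p)) with hr
  have hr2 : r ^ 2 = (1 + 3 * p) / (1 - p) := Real.sq_sqrt (by positivity)
  have hr1 : 1 < r := by
    rw [hr]; apply Real.lt_sqrt_of_sq_lt
    rw [lt_div_iff₀ hq]; linarith
  refine ⟨by linarith, ?_⟩
  have h3 : r ^ 2 * (1 - p) = 1 + 3 * p := by rw [hr2]; field_simp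
  linear_combination (-1 / 4) * h3

lemma alpha_le {p a : ℝ} (hp : 0 < p) (hp1 : p < 0.2738) (ha : 0 < a)
    (hpa : p = (1 - p) * (a + a ^ 2)) : a ≤ 0.292 := by
  by_contra hgt
  push Not at hgt
  nlinarith

/-- The comparison `α^t ≤ e p^t`: since `α = p (1 + α²/(1+α))`, it follows from
`t α² ≤ 1 + α`, which is a consequence of `(t+2) p² ≤ 1 + p`. -/
lemma alpha_pow_le {t : ℕ} {p a : ℝ} (hp : 0 < p) (ha : 0 < a)
    (hpa : p = (1 - p) * (a + a ^ 2)) (h : (t + 2) * p ^ 2 ≤ 1 + p) :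
    a ^ t ≤ 2.7183 * p ^ t := by
  have hD : p * (1 + a + a ^ 2) = a * (1 + a) := by linear_combination hpa
  have hta : (t : ℝ) * a ^ 2 ≤ 1 + a := by
    have h1 : (t + 2) * (p * (1 + a + a ^ 2)) ^ 2 ≤
        (1 + a + a ^ 2) ^ 2 + p * (1 + a + a ^ 2) * (1 + a + a ^ 2) := by
      have := mul_le_mul_of_nonneg_right h (sq_nonneg (1 + a + a ^ 2))
      nlinarith
    rw [hD] at h1
    have h2 : (t * a ^ 2) * (1 + a) ^ 2 ≤ (1 + a) * (1 + a) ^ 2 := by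
      nlinarith [pow_pos ha 3]
    exact le_of_mul_le_mul_right h2 (by positivity)
  set u := a ^ 2 / (1 + a) with hu
  have hau : a = p * (1 + u) := by
    rw [hu]; field_simp; linarith
  have htu : t * u ≤ 1 := by
    rw [hu, ← mul_div_assoc, div_le_one (by positivity)]; exact hta
  have hu0 : 0 ≤ u := by positivity
  have h1 : (1 + u) ^ t ≤ Real.exp 1 := by
    calc (1 + u) ^ t ≤ (Real.exp u) ^ t := by
          apply pow_le_pow_left₀ (by positivity); linarith [Real.add_one_le_exp u]
      _ = Real.exp (t * u) := by rw [← Real.exp_nat_mul]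
      _ ≤ Real.exp 1 := Real.exp_le_exp.2 htu
  have h2 : (1 + u) ^ t ≤ 2.7183 := by linarith [Real.exp_one_lt_d9]
  calc a ^ t = p ^ t * (1 + u) ^ t := by rw [← mul_pow, ← hau]
    _ ≤ p ^ t * 2.7183 := by gcongr
    _ = _ := by ring

lemma choose_step (t s : ℕ) : (t + 3 * s + 3).choose (s + 1) * ((s + 1) * (t + 2 * s + 2) *
    (t + 2 * s + 1)) = (t + 3 * s).choose s * ((t + 3 * s + 3) * (t + 3 * s + 2) *
    (t + 3 * s + 1)) := by
  have h1 := Nat.choose_mul_succ_eq (t + 3 * s) s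
  have h2 := Nat.choose_mul_succ_eq (t + 3 * s + 1) s
  have h3 := Nat.add_one_mul_choose_eq (t + 3 * s + 2) s
  rw [show t + 3 * s + 1 - s = t + 2 * s + 1 by omega] at h1
  rw [show t + 3 * s + 1 + 1 - s = t + 2 * s + 2 by omega] at h2
  have e2 : t + 3 * s + 1 + 1 = t + 3 * s + 2 := rfl
  have e3 : t + 3 * s + 2 + 1 = t + 3 * s + 3 := rfl
  rw [e2] at h2
  rw [e3] at h3
  calc _ = ((t + 3 * s + 3).choose (s + 1) * (s + 1)) * (t + 2 * s + 2) * (t + 2 * s + 1) := by ring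
    _ = (t + 3 * s + 3) * ((t + 3 * s + 2).choose s * (t + 2 * s + 2)) * (t + 2 * s + 1) := by
        rw [← h3]; ring
    _ = (t + 3 * s + 3) * (t + 3 * s + 2) * ((t + 3 * s + 1).choose s * (t + 2 * s + 1)) := by
        rw [← h2]; ring
    _ = _ := by rw [← h1]; ring

lemma ballot_weight_succ {t s : ℕ} {p : ℝ} (hs : 3 ≤ s) (hp : 0 < p) (hp1 : p < 0.2738)
    (h : (t + 2) * p ^ 2 ≤ 1 + p) :
    ballot (s + 1) (t + 2 * (s + 1)) * (p ^ 2 * (1 - p)) ^ (s + 1) ≤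
      ballot s (t + 2 * s) * (p ^ 2 * (1 - p)) ^ s := by
  have hq : 0 < 1 - p := by linarith
  have hsr : (3 : ℝ) ≤ s := by exact_mod_cast hs
  have ht0 : (0 : ℝ) ≤ t := Nat.cast_nonneg t
  have hc : ((t + 3 * s + 3).choose (s + 1) : ℝ) * ((s + 1) * (t + 2 * s + 2) *
    (t + 2 * s + 1)) = ((t + 3 * s).choose s : ℝ) * ((t + 3 * s + 3) * (t + 3 * s + 2) *
    (t + 3 * s + 1)) := by exact_mod_cast choose_step t s
  set K : ℝ := ((t + 3 * s).choose s : ℝ) with hK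
  have hK0 : 0 ≤ K := Nat.cast_nonneg _
  have e1 : ballot s (t + 2 * s) = K * (t + 1) / (t + 2 * s + 1) := by
    unfold ballot
    rw [show s + (t + 2 * s) = t + 3 * s by ring, ← hK]
    push_cast
    congr 2; ring
  have e2 : ballot (s + 1) (t + 2 * (s + 1)) =
      K * (t + 1) / (t + 2 * s + 1) * (((t + 3 * s + 3) * (t + 3 * s + 2) *
    (t + 3 * s + 1)) / ((s + 1) * (t + 2 * s + 2) * (t + 2 * s + 3))) := by
    unfold ballot
    rw [show s + 1 + (t + 2 * (s + 1)) = t + 3 * s + 3 by ring]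
    have : ((t + 3 * s + 3).choose (s + 1) : ℝ) = K * ((t + 3 * s + 3) * (t + 3 * s + 2) *
        (t + 3 * s + 1)) / ((s + 1) * (t + 2 * s + 2) * (t + 2 * s + 1)) := by
      rw [eq_div_iff (by positivity), hc]
    rw [this]
    push_cast
    field_simp
    ring
  rw [e1, e2, pow_succ]
  -- each of the first two ratios is at most `3/2`
  have hratio : ((t + 3 * s + 3) * (t + 3 * s + 2) * (t + 3 * s + 1)) /
      ((s + 1) * (t + 2 * s + 2) * (t + 2 * s + 3)) * (p ^ 2 * (1 - p)) ≤ (1 : ℝ) := by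
    rw [div_mul_eq_mul_div, div_le_one (by positivity)]
    have b1 : (t + 3 * s + 3 : ℝ) ≤ 3 / 2 * (t + 2 * s + 3) := by linarith
    have b2 : (t + 3 * s + 2 : ℝ) ≤ 3 / 2 * (t + 2 * s + 2) := by linarith
    have b3 : (t + 3 * s + 1) * (p ^ 2 * (1 - p)) ≤ (4 / 9 : ℝ) * (s + 1) := by
      have c1 : (t + 3 * s + 1) * p ^ 2 ≤ 1 + p + (3 * s - 1) * p ^ 2 := by linarith
      have c2 : p ^ 2 ≤ 0.075 := by nlinarith
      have c3 : (3 * s - 1) * p ^ 2 ≤ (3 * s - 1) * 0.075 :=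
        mul_le_mul_of_nonneg_left c2 (by linarith)
      have c4 := mul_le_mul_of_nonneg_right (c1.trans (add_le_add_right c3 _)) hq.le
      nlinarith
    calc ((t + 3 * s + 3) * (t + 3 * s + 2) * (t + 3 * s + 1)) * (p ^ 2 * (1 - p))
        = ((t + 3 * s + 3) * (t + 3 * s + 2)) * ((t + 3 * s + 1) * (p ^ 2 * (1 - p))) := by ring
      _ ≤ ((3 / 2 * (t + 2 * s + 3)) * (3 / 2 * (t + 2 * s + 2))) * ((4 / 9 : ℝ) * (s + 1)) := by
          gcongr
      _ = _ := by ring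
  have hnn : 0 ≤ K * (t + 1) / (t + 2 * s + 1) * (p ^ 2 * (1 - p)) ^ s := by positivity
  have := mul_le_mul_of_nonneg_left hratio hnn
  rw [mul_one] at this
  refine le_trans (le_of_eq ?_) this
  ring

lemma ballot_weight_le {t s : ℕ} {p : ℝ} (hs : 3 ≤ s) (hp : 0 < p) (hp1 : p < 0.2738)
    (h : (t + 2) * p ^ 2 ≤ 1 + p) :
    ballot s (t + 2 * s) * (p ^ 2 * (1 - p)) ^ s ≤ 0.273 := by
  induction s, hs using Nat.le_induction with
  | base =>
    have hq : 0 < 1 - p := by linarith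
    have ht0 : (0 : ℝ) ≤ t := Nat.cast_nonneg t
    have hc : ((t + 9).choose 3 : ℝ) = (t + 9) * (t + 8) * (t + 7) / 6 := by
      have h1 := Nat.add_one_mul_choose_eq (t + 8) 2
      have h2 := Nat.add_one_mul_choose_eq (t + 7) 1
      rw [Nat.choose_one_right] at h2
      have h1' : ((t : ℝ) + 8 + 1) * ((t + 8).choose 2 : ℝ) = ((t + 8 + 1).choose (2 + 1) : ℝ) * (2 + 1) := by
        exact_mod_cast h1
      have h2' : ((t : ℝ) + 7 + 1) * (t + 7) = ((t + 7 + 1).choose (1 + 1) : ℝ) * (1 + 1) := by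
        exact_mod_cast h2
      have e1 : t + 8 + 1 = t + 9 := rfl
      have e2 : t + 7 + 1 = t + 8 := rfl
      rw [e1] at h1'
      rw [e2] at h2'
      norm_num at h1' h2'
      nlinarith
    have e : ballot 3 (t + 2 * 3) = (t + 1) * (t + 9) * (t + 8) / 6 := by
      unfold ballot
      rw [show 3 + (t + 2 * 3) = t + 9 by ring, hc]
      push_cast
      field_simp
      ring
    rw [e]
    have f1 : (t + 1) * p ^ 2 * (1 - p) ≤ 1 := by
      have : (t + 1) * p ^ 2 ≤ 1 + p := by nlinarith
      nlinarith
    have f2 : (t + 9) * p ^ 2 * (1 - p) ≤ 1.307 := by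
      have : (t + 9) * p ^ 2 ≤ 1 + p + 7 * p ^ 2 := by linarith
      have := mul_le_mul_of_nonneg_right this hq.le
      nlinarith [mul_nonneg (sub_nonneg.2 hp1.le) (show 0 ≤
        6 * (0.2738 + p) - 7 * (0.2738 ^ 2 + 0.2738 * p + p ^ 2) by nlinarith)]
    have f3 : (t + 8) * p ^ 2 * (1 - p) ≤ 1.253 := by
      have : (t + 8) * p ^ 2 ≤ 1 + p + 6 * p ^ 2 := by linarith
      have := mul_le_mul_of_nonneg_right this hq.le
      nlinarith [mul_nonneg (sub_nonneg.2 hp1.le) (show 0 ≤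
        5 * (0.2738 + p) - 6 * (0.2738 ^ 2 + 0.2738 * p + p ^ 2) by nlinarith)]
    calc (t + 1) * (t + 9) * (t + 8) / 6 * (p ^ 2 * (1 - p)) ^ 3
        = ((t + 1) * p ^ 2 * (1 - p)) * ((t + 9) * p ^ 2 * (1 - p)) *
          ((t + 8) * p ^ 2 * (1 - p)) / 6 := by ring
      _ ≤ 1 * 1.307 * 1.253 / 6 := by gcongr
      _ ≤ 0.273 := by norm_num
  | succ s hs ih =>
    exact (ballot_weight_succ hs hp hp1 h).trans ih

/-! ### Up-closed shifted families -/

/-- The family of all subsets of `[n]` containing a member of `𝒢`. -/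
def upClosure (n : ℕ) (𝒢 : Finset (Finset ℕ)) : Finset (Finset ℕ) :=
  (Finset.Icc 1 n).powerset.filter (fun H => ∃ G ∈ 𝒢, G ⊆ H)

lemma mem_upClosure {n : ℕ} {𝒢 : Finset (Finset ℕ)} {H : Finset ℕ} :
    H ∈ upClosure n 𝒢 ↔ H ⊆ Finset.Icc 1 n ∧ ∃ G ∈ 𝒢, G ⊆ H := by
  simp [upClosure]

lemma subset_upClosure {n : ℕ} {𝒢 : Finset (Finset ℕ)} (hF : FamilyOn n 𝒢) :
    𝒢 ⊆ upClosure n 𝒢 :=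
  fun G hG => mem_upClosure.2 ⟨hF G hG, G, hG, Finset.Subset.refl G⟩

lemma upClosure_familyOn (n : ℕ) (𝒢 : Finset (Finset ℕ)) : FamilyOn n (upClosure n 𝒢) :=
  fun _ hG => (mem_upClosure.1 hG).1

lemma upClosure_inclMaximal (n : ℕ) (𝒢 : Finset (Finset ℕ)) : InclMaximal n (upClosure n 𝒢) := by
  intro G hG H hGH hH
  obtain ⟨_, G', hG', h⟩ := mem_upClosure.1 hG
  exact mem_upClosure.2 ⟨hH, G', hG', h.trans hGH⟩

lemma upClosure_shifted {n : ℕ} {𝒢 : Finset (Finset ℕ)} (hS : Shifted n 𝒢) :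
    Shifted n (upClosure n 𝒢) := by
  intro i j hi hij hj H hH hjH hiH
  obtain ⟨hHn, G, hG, hGH⟩ := mem_upClosure.1 hH
  refine mem_upClosure.2 ⟨?_, ?_⟩
  · apply Finset.insert_subset (by rw [mem_Icc]; omega)
    exact (Finset.erase_subset _ _).trans hHn
  · by_cases hjG : j ∈ G
    · exact ⟨_, hS i j hi hij hj G hG hjG (fun h => hiH (hGH h)),
        Finset.insert_subset_insert _ (Finset.erase_subset_erase _ hGH)⟩
    · refine ⟨G, hG, fun x hx => Finset.mem_insert_of_mem (Finset.mem_erase.2 ⟨?_, hGH hx⟩)⟩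
      rintro rfl
      exact hjG hx

lemma upClosure_intersecting3 {n t : ℕ} {𝒢 : Finset (Finset ℕ)} (hI : Intersecting3 t 𝒢) :
    Intersecting3 t (upClosure n 𝒢) := by
  intro H₁ h₁ H₂ h₂ H₃ h₃
  obtain ⟨_, G₁, hG₁, e₁⟩ := mem_upClosure.1 h₁
  obtain ⟨_, G₂, hG₂, e₂⟩ := mem_upClosure.1 h₂
  obtain ⟨_, G₃, hG₃, e₃⟩ := mem_upClosure.1 h₃
  exact (hI _ hG₁ _ hG₂ _ hG₃).trans (Finset.card_le_card
    (Finset.inter_subset_inter (Finset.inter_subset_inter e₁ e₂) e₃))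

/-- The set `[n] \ [t+2s, t+3s]`, which dominates every set outside `F_s^t`. -/
def gap (n t s : ℕ) : Finset ℕ := Finset.Icc 1 n \ Finset.Icc (t + 2 * s) (t + 3 * s)

lemma cnt_gap {n t s : ℕ} (ht : 1 ≤ t) (k : ℕ) (hk : k ≤ n) :
    cnt (gap n t s) k = min k (t + 2 * s - 1) + (k - (t + 3 * s)) := by
  induction k with
  | zero => simp [cnt_zero]
  | succ k ih =>
    rw [cnt_succ, ih (by omega)]
    simp only [gap, mem_sdiff, mem_Icc]
    split_ifs <;> omega

lemma gap_mem {n t s : ℕ} {U : Finset (Finset ℕ)} (ht : 1 ≤ t) (hF : FamilyOn n U)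
    (hS : Shifted n U) (hM : InclMaximal n U) (hU : ¬ U ⊆ Fst n t s) : gap n t s ∈ U := by
  rw [Finset.not_subset] at hU
  obtain ⟨G, hG, hGF⟩ := hU
  have hlt : cnt G (t + 3 * s) < t + 2 * s := by
    simp only [Fst, mem_filter, mem_powerset, not_and, not_le] at hGF
    exact hGF (hF G hG)
  have hle : ∀ k ≤ n, cnt G k ≤ cnt (gap n t s) k := by
    intro k hk
    rw [cnt_gap ht k hk]
    have h1 := cnt_le G k
    rcases le_total k (t + 3 * s) with h | h
    · have := cnt_mono G h
      omega
    · have := cnt_lip G h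
      omega
  refine dominate hS hM hF Finset.sdiff_subset _ G hG rfl fun k => ?_
  rcases le_total k n with h | h
  · exact hle k h
  · refine le_trans (Finset.card_le_card ?_) ((hle n le_rfl).trans (cnt_mono _ h))
    intro x hx
    rw [mem_inter] at hx ⊢
    exact ⟨hx.1, hF G hG hx.1⟩

/-- Frankl's lemma for the triple `gap n t s, G, G`. If the step `k` exceeds `t + 3s`, the inequality
says that the walk of `G` reaches the line `y = x + t + s + 1`. -/
lemma gap_frankl {n t s : ℕ} {U : Finset (Finset ℕ)} (ht : 1 ≤ t) (hF : FamilyOn n U)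
    (hS : Shifted n U) (hM : InclMaximal n U) (hI : Intersecting3 t U) (hU : ¬ U ⊆ Fst n t s)
    {G : Finset ℕ} (hG : G ∈ U) :
    ∃ k ≤ n, 2 * k + t ≤ min k (t + 2 * s - 1) + (k - (t + 3 * s)) + 2 * cnt G k := by
  obtain ⟨k, hk, h⟩ := frankl ht hS hF hI _ _ (gap_mem ht hF hS hM hU) G hG G hG rfl
  rw [cnt_gap ht k hk] at h
  exact ⟨k, hk, by omega⟩

lemma mu_mono {p : ℝ} (hp : 0 ≤ p) (hp1 : p ≤ 1) {n : ℕ} {A B : Finset (Finset ℕ)} (h : A ⊆ B) :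
    mu p n A ≤ mu p n B := by
  unfold mu
  refine Finset.sum_le_sum_of_subset_of_nonneg h fun _ _ _ => ?_
  have : 0 ≤ 1 - p := by linarith
  positivity

lemma mu_Fst_le {p : ℝ} (hp : 0 ≤ p) (hp1 : p ≤ 1) {n t s : ℕ} (hn : t + 3 * s ≤ n) :
    mu p n (Fst n t s) ≤ ∑ j ∈ Finset.range (s + 1),
      ((t + 3 * s).choose (t + 2 * s + j) : ℝ) *
        (p ^ (t + 2 * s + j) * (1 - p) ^ (t + 3 * s - (t + 2 * s + j))) := by
  have h := mu_le_trace hp hp1 hn (A := Fst n t s)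
    (T := (Finset.range (s + 1)).biUnion
      (fun j => Finset.powersetCard (t + 2 * s + j) (Finset.Icc 1 (t + 3 * s))))
    (fun G hG => by simp only [Fst, mem_filter, mem_powerset] at hG; exact hG.1)
    (fun Y hY => by
      simp only [mem_biUnion, mem_powersetCard] at hY
      obtain ⟨_, _, h, _⟩ := hY
      exact h)
    (fun G hG => by
      simp only [Fst, mem_filter, mem_powerset] at hG
      simp only [mem_biUnion, mem_powersetCard, mem_range]
      have := cnt_le G (t + 3 * s)
      unfold cnt at this
      exact ⟨(G ∩ Finset.Icc 1 (t + 3 * s)).card - (t + 2 * s), by omega,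
        Finset.inter_subset_right, by omega⟩)
  refine h.trans (le_of_eq ?_)
  rw [Finset.sum_biUnion]
  · refine Finset.sum_congr rfl fun j _ => ?_
    rw [Finset.sum_congr rfl (g := fun _ =>
      p ^ (t + 2 * s + j) * (1 - p) ^ (t + 3 * s - (t + 2 * s + j)))]
    · simp
    · intro Y hY
      rw [(mem_powersetCard.1 hY).2]
  · intro i _ j _ hij
    apply Finset.pairwise_disjoint_powersetCard
    omega

lemma exists_missing {G : Finset ℕ} {k : ℕ} (h : cnt G k < k) : ∃ i ∈ Finset.Icc 1 k, i ∉ G := by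
  by_contra hcon
  push Not at hcon
  have : cnt (Finset.Icc 1 k) k ≤ cnt G k := cnt_subset (fun x hx => hcon x (mem_inter.1 hx).1)
  simp [cnt] at this
  unfold cnt at h
  omega

lemma eq_sdiff_pair {G : Finset ℕ} {m i j : ℕ} (hc : cnt G (m + 2) = m)
    (hi : i ∈ Finset.Icc 1 (m + 2)) (hj : j ∈ Finset.Icc 1 (m + 2)) (hij : i ≠ j)
    (hiG : i ∉ G) (hjG : j ∉ G) :
    G ∩ Finset.Icc 1 (m + 2) = Finset.Icc 1 (m + 2) \ {i, j} := by
  apply Finset.eq_of_subset_of_card_le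
  · intro x hx
    rw [mem_inter] at hx
    simp only [mem_sdiff, mem_insert, mem_singleton, not_or]
    exact ⟨hx.2, fun h => hiG (h ▸ hx.1), fun h => hjG (h ▸ hx.1)⟩
  · rw [Finset.card_sdiff_of_subset (by
      intro x hx
      simp only [mem_insert, mem_singleton] at hx
      rcases hx with rfl | rfl <;> assumption), Finset.card_pair hij]
    unfold cnt at hc
    simp [hc]

lemma eq_sdiff_singleton {G : Finset ℕ} {m i : ℕ} (hc : cnt G (m + 1) = m)
    (hi : i ∈ Finset.Icc 1 (m + 1)) (hiG : i ∉ G) :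
    G ∩ Finset.Icc 1 (m + 1) = Finset.Icc 1 (m + 1) \ {i} := by
  apply Finset.eq_of_subset_of_card_le
  · intro x hx
    rw [mem_inter] at hx
    simp only [mem_sdiff, mem_singleton]
    exact ⟨hx.2, fun h => hiG (h ▸ hx.1)⟩
  · rw [Finset.card_sdiff_of_subset (by simpa using hi)]
    unfold cnt at hc
    simp [hc]

/-! ### Families with a common contact point -/

/-- The walk of `G` never rises above the line `y = 2x + t` in its first `n` steps. -/
def Crit (n t : ℕ) (G : Finset ℕ) : Prop := ∀ k ≤ n, 3 * cnt G k ≤ 2 * k + t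

lemma not_crit {n t : ℕ} {G : Finset ℕ} (h : ¬ Crit n t G) :
    ∃ k ≤ n, 2 * k + t + 1 ≤ 3 * cnt G k := by
  unfold Crit at h
  push Not at h
  obtain ⟨k, hk, h⟩ := h
  exact ⟨k, hk, by omega⟩

lemma mem_powersetCard_of_cnt {G : Finset ℕ} {m c : ℕ} (h : cnt G m = c) :
    G ∩ Finset.Icc 1 m ∈ Finset.powersetCard c (Finset.Icc 1 m) :=
  mem_powersetCard.2 ⟨Finset.inter_subset_right, h⟩

/-- In all the `contact` lemmas, the walks of `U` that stay weakly below the line `y = 2x + t` all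
pass through the common point `(s, t + 2s)`. For `s = 0` and `U ⊄ F_0^t`, each of them afterwards
rises to the line `y = x + t + 1`. -/
lemma contact_zero {n t : ℕ} {p a : ℝ} {U : Finset (Finset ℕ)} (ht : 1 ≤ t) (hp : 0 < p)
    (hp1 : p < 1) (ha : 0 < a) (hpa : p = (1 - p) * (a + a ^ 2)) (hr : a + a ^ 2 ≤ 1)
    (hF : FamilyOn n U) (hS : Shifted n U) (hM : InclMaximal n U) (hI : Intersecting3 t U)
    (hU : ¬ U ⊆ Fst n t 0) (hc : ∀ G ∈ U, Crit n t G → cnt G (t + 3 * 0) = t + 2 * 0) :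
    mu p n U ≤ a ^ (t + 1) + p ^ t * a ^ 2 := by
  have h := mu_le_point (s := 0) (t := t) (T₁ := ∅)
    (T₂ := Finset.powersetCard (t + 2 * 0) (Finset.Icc 1 (t + 3 * 0))) hp hp1 ha hpa hr hF
    (by simp) (fun Y hY => mem_powersetCard.1 hY) (fun G hG => ?_)
  · simpa using h
  · by_cases hcr : Crit n t G
    · refine Or.inr (Or.inr ⟨mem_powersetCard_of_cnt (hc G hG hcr), ?_⟩)
      obtain ⟨k, hk, h⟩ := gap_frankl ht hF hS hM hI hU hG
      have := cnt_le G k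
      have h0 := cnt_le G t
      refine ⟨k, hk, ?_, ?_⟩
      · rcases eq_or_ne k t with rfl | hne <;> omega
      · omega
    · exact Or.inl (not_crit hcr)

/-- For `s = 1` the only trace on `[t+3]` exempt from rising to `y = x + t + 2` later is
`[t+3] \ {t+1}`. -/
lemma contact_one {n t : ℕ} {p a : ℝ} {U : Finset (Finset ℕ)} (ht : 1 ≤ t) (hp : 0 < p)
    (hp1 : p < 1) (ha : 0 < a) (hpa : p = (1 - p) * (a + a ^ 2)) (hr : a + a ^ 2 ≤ 1)
    (hF : FamilyOn n U) (hS : Shifted n U) (hM : InclMaximal n U) (hI : Intersecting3 t U)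
    (hn : t + 3 * 1 ≤ n)
    (hU : ¬ U ⊆ Fst n t 1) (hc : ∀ G ∈ U, Crit n t G → cnt G (t + 3 * 1) = t + 2 * 1) :
    mu p n U ≤ a ^ (t + 1) + p ^ t * (p ^ 2 * (1 - p)) * ((1 - a) + a ^ 2 * (t + 3)) := by
  have h := mu_le_point (s := 1) (t := t) (T₁ := {Finset.Icc 1 (t + 3 * 1) \ {t + 1}})
    (T₂ := Finset.powersetCard (t + 2 * 1) (Finset.Icc 1 (t + 3 * 1))) hp hp1 ha hpa hr hF
    ?_ (fun Y hY => mem_powersetCard.1 hY) (fun G hG => ?_)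
  · refine h.trans (le_of_eq ?_)
    have e : (t + 3 * 1).choose (t + 2 * 1) = t + 3 := by
      rw [show t + 3 * 1 = t + 2 * 1 + 1 by ring, Nat.choose_succ_self_right]
    rw [Finset.card_powersetCard, Nat.card_Icc, Nat.add_sub_cancel, e]
    simp
  · intro Y hY
    rw [mem_singleton] at hY
    subst hY
    refine ⟨Finset.sdiff_subset, ?_⟩
    rw [Finset.card_sdiff_of_subset (by simp)]
    simp
  · by_cases hcr : Crit n t G
    · have h3 : cnt G (t + 3) = t + 2 := hc G hG hcr
      obtain ⟨k, hk, h⟩ := gap_frankl ht hF hS hM hI hU hG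
      rcases Nat.lt_or_ge (t + 3 * 1) k with hlt | hge
      · exact Or.inr (Or.inr ⟨mem_powersetCard_of_cnt h3, k, hk, hlt, by omega⟩)
      · refine Or.inr (Or.inl ⟨hn, ?_⟩)
        have h1 := hcr (t + 1) (by omega)
        have h1' := cnt_lip G (show t + 1 ≤ t + 3 by omega)
        have h2 := cnt_lip G (show t + 1 ≤ t + 2 by omega)
        have hk' := cnt_le G k
        have hkt : k = t := by
          rcases Nat.lt_or_ge k t with hl | hg
          · omega
          · obtain rfl | rfl | rfl | rfl : k = t ∨ k = t + 1 ∨ k = t + 2 ∨ k = t + 3 := by omega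
            all_goals omega
        subst hkt
        have hnot : k + 1 ∉ G := by
          intro hmem
          have := cnt_succ G k
          rw [if_pos hmem] at this
          omega
        rw [mem_singleton]
        exact eq_sdiff_singleton (m := k + 2) h3 (by rw [mem_Icc]; omega) hnot
    · exact Or.inl (not_crit hcr)

/-- The possible traces on `[t+6]` of a walk that stays weakly below `y = 2x + t`, passes through
`(2, t+4)`, and satisfies the inequality of `gap_frankl` (for `s = 2`) at some step `k ≤ t + 6`.
Each is `[t+6]` without two elements `i < j`. -/
def exceptTwo (t : ℕ) : Finset (Finset ℕ) :=
  ((Finset.Icc 1 (t + 1)) ×ˢ ({t + 3, t + 4} : Finset ℕ)).image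
    (fun x => Finset.Icc 1 (t + 4 + 2) \ {x.1, x.2}) ∪ {Finset.Icc 1 (t + 4 + 2) \ {t + 1, t + 2}}

lemma card_exceptTwo (t : ℕ) : (exceptTwo t).card ≤ 2 * t + 3 := by
  refine (Finset.card_union_le _ _).trans ?_
  rw [card_singleton]
  refine (Nat.add_le_add_right Finset.card_image_le 1).trans ?_
  rw [Finset.card_product, Finset.card_pair (by omega), Nat.card_Icc]
  omega

lemma exceptTwo_spec {t : ℕ} {Y : Finset ℕ} (hY : Y ∈ exceptTwo t) :
    Y ⊆ Finset.Icc 1 (t + 4 + 2) ∧ Y.card = t + 4 := by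
  have key : ∀ i j : ℕ, 1 ≤ i → i < j → j ≤ t + 4 + 2 →
      Finset.Icc 1 (t + 4 + 2) \ {i, j} ⊆ Finset.Icc 1 (t + 4 + 2) ∧
      (Finset.Icc 1 (t + 4 + 2) \ {i, j}).card = t + 4 := by
    intro i j hi hij hj
    refine ⟨Finset.sdiff_subset, ?_⟩
    rw [Finset.card_sdiff_of_subset, Finset.card_pair (by omega), Nat.card_Icc]
    · omega
    · intro x hx
      simp only [mem_insert, mem_singleton] at hx
      rw [mem_Icc]; omega
  simp only [exceptTwo, mem_union, mem_image, mem_product, mem_Icc, mem_insert, mem_singleton,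
    Prod.exists] at hY
  rcases hY with ⟨i, j, ⟨hi, hj⟩, rfl⟩ | rfl
  · exact key i j hi.1 (by omega) (by omega)
  · exact key _ _ (by omega) (by omega) (by omega)

/-- For `s = 2` the traces on `[t+6]` exempt from rising to `y = x + t + 3` later lie in
`exceptTwo t`. -/
lemma contact_two {n t : ℕ} {p a : ℝ} {U : Finset (Finset ℕ)} (ht : 1 ≤ t) (hp : 0 < p)
    (hp1 : p < 1) (ha : 0 < a) (ha1 : a ≤ 1) (hpa : p = (1 - p) * (a + a ^ 2))
    (hr : a + a ^ 2 ≤ 1)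
    (hF : FamilyOn n U) (hS : Shifted n U) (hM : InclMaximal n U) (hI : Intersecting3 t U)
    (hn : t + 3 * 2 ≤ n)
    (hU : ¬ U ⊆ Fst n t 2) (hc : ∀ G ∈ U, Crit n t G → cnt G (t + 3 * 2) = t + 2 * 2) :
    mu p n U ≤ a ^ (t + 1) + p ^ t * (p ^ 2 * (1 - p)) ^ 2 *
      ((1 - a) * (2 * t + 3) + a ^ 2 * ((t + 6).choose 2 : ℝ)) := by
  have hq : 0 < 1 - p := by linarith
  have h := mu_le_point (s := 2) (t := t) (T₁ := exceptTwo t)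
    (T₂ := Finset.powersetCard (t + 2 * 2) (Finset.Icc 1 (t + 3 * 2))) hp hp1 ha hpa hr hF
    (fun Y hY => exceptTwo_spec hY) (fun Y hY => mem_powersetCard.1 hY) (fun G hG => ?_)
  · refine h.trans ?_
    have e : (t + 3 * 2).choose (t + 2 * 2) = (t + 6).choose 2 :=
      Nat.choose_symm_of_eq_add (by ring)
    rw [Finset.card_powersetCard, Nat.card_Icc, Nat.add_sub_cancel, e]
    have h1 : ((exceptTwo t).card : ℝ) ≤ 2 * t + 3 := by exact_mod_cast card_exceptTwo t
    have h2 : 0 ≤ 1 - a := by linarith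
    gcongr
  · by_cases hcr : Crit n t G
    · have h6 : cnt G (t + 6) = t + 4 := hc G hG hcr
      obtain ⟨k, hk, h⟩ := gap_frankl ht hF hS hM hI hU hG
      rcases Nat.lt_or_ge (t + 3 * 2) k with hlt | hge
      · exact Or.inr (Or.inr ⟨mem_powersetCard_of_cnt h6, k, hk, hlt, by omega⟩)
      · refine Or.inr (Or.inl ⟨hn, ?_⟩)
        have h1 := hcr (t + 1) (by omega)
        have h4 := hcr (t + 4) (by omega)
        have h46 := cnt_lip G (show t + 4 ≤ t + 6 by omega)
        have h45 := cnt_lip G (show t + 4 ≤ t + 5 by omega)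
        have hk' := cnt_le G k
        obtain ⟨i, hi, hiG⟩ := exists_missing (show cnt G (t + 1) < t + 1 by omega)
        rw [mem_Icc] at hi
        have s1 := cnt_succ G t
        have s2 : cnt G (t + 2) = cnt G (t + 1) + if t + 2 ∈ G then 1 else 0 :=
          cnt_succ G (t + 1)
        have s3 : cnt G (t + 3) = cnt G (t + 2) + if t + 3 ∈ G then 1 else 0 :=
          cnt_succ G (t + 2)
        have s4 : cnt G (t + 4) = cnt G (t + 3) + if t + 4 ∈ G then 1 else 0 :=
          cnt_succ G (t + 3)
        have hm := fun (i j : ℕ) (hi : 1 ≤ i) (hij : i < j) (hj : j ≤ t + 4 + 2) =>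
          eq_sdiff_pair (G := G) (m := t + 4) (i := i) (j := j) h6
          (by rw [mem_Icc]; omega) (by rw [mem_Icc]; omega) (by omega)
        simp only [exceptTwo, mem_union, mem_image, mem_product, mem_Icc, mem_insert,
          mem_singleton, Prod.exists]
        by_cases m3 : t + 3 ∈ G
        · by_cases m4 : t + 4 ∈ G
          · right
            rw [if_pos m3] at s3
            rw [if_pos m4] at s4
            have hkt : cnt G t = t := by
              rcases Nat.lt_or_ge k t with hl | hg
              · omega
              · obtain rfl | rfl | rfl | rfl | rfl | rfl | rfl : k = t ∨ k = t + 1 ∨ k = t + 2 ∨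
                  k = t + 3 ∨ k = t + 4 ∨ k = t + 5 ∨ k = t + 6 := by omega
                all_goals (split_ifs at s1 s2 <;> omega)
            have m1 : t + 1 ∉ G := fun hmem => by rw [if_pos hmem] at s1; omega
            have m2 : t + 2 ∉ G := fun hmem => by
              rw [if_pos hmem] at s2; omega
            exact hm (t + 1) (t + 2) (by omega) (by omega) (by omega) m1 m2
          · exact Or.inl ⟨i, t + 4, ⟨hi, Or.inr rfl⟩,
              (hm i (t + 4) hi.1 (by omega) (by omega) hiG m4).symm⟩
        · exact Or.inl ⟨i, t + 3, ⟨hi, Or.inl rfl⟩,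
            (hm i (t + 3) hi.1 (by omega) (by omega) hiG m3).symm⟩
    · exact Or.inl (not_crit hcr)

/-- For large `s`, counting the paths to `(s, t + 2s)` weakly below the line suffices. -/
lemma contact_large {n t s : ℕ} {p a : ℝ} {U : Finset (Finset ℕ)} (hp : 0 < p)
    (hp1 : p < 1) (ha : 0 < a) (ha1 : a ≤ 1) (hpa : p = (1 - p) * (a + a ^ 2))
    (hr : a + a ^ 2 ≤ 1)
    (hF : FamilyOn n U) (hn : t + 3 * s ≤ n)
    (hc : ∀ G ∈ U, Crit n t G → cnt G (t + 3 * s) = t + 2 * s) :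
    mu p n U ≤ a ^ (t + 1) + p ^ t * (1 - a) *
      (ballot s (t + 2 * s) * (p ^ 2 * (1 - p)) ^ s) := by
  have hq : 0 < 1 - p := by linarith
  have h := mu_le_point (s := s) (t := t) (T₁ := below t s) (T₂ := ∅) hp hp1 ha hpa hr hF
    (fun Y hY => mem_powersetCard.1 (mem_filter.1 hY).1) (by simp) (fun G hG => ?_)
  · refine h.trans ?_
    have h2 : 0 ≤ 1 - a := by linarith
    have h3 := card_below t s
    calc _ = a ^ (t + 1) + p ^ t * (1 - a) * ((below t s).card * (p ^ 2 * (1 - p)) ^ s) := by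
          simp only [card_empty, Nat.cast_zero]; ring
      _ ≤ _ := by gcongr
  · by_cases hcr : Crit n t G
    · refine Or.inr (Or.inl ⟨hn, mem_filter.2 ⟨mem_powersetCard_of_cnt (hc G hG hcr), ?_⟩⟩)
      intro k hk
      rw [cnt_inter G hk]
      exact hcr k (hk.trans hn)
    · exact Or.inl (not_crit hcr)

/-! ### The dichotomy -/

/-- `C(t+6, 2) p⁴q²` is `p^(-t)` times the probability of passing through `(2, t+4)`. -/
lemma choose_two_weight {t : ℕ} {p : ℝ} (hp : 0 < p) (hp1 : p < 0.2738)
    (h : (t + 2) * p ^ 2 ≤ 1 + p) :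
    ((t + 6).choose 2 : ℝ) * (p ^ 2 * (1 - p)) ^ 2 ≤ 0.63 ∧
      (t + 6) * (p ^ 2 * (1 - p)) ≤ 1.145 := by
  have hq : 0 < 1 - p := by linarith
  have ht0 : (0 : ℝ) ≤ t := Nat.cast_nonneg t
  have f1 : (t + 6) * (p ^ 2 * (1 - p)) ≤ 1.145 := by
    have : (t + 6) * p ^ 2 ≤ 1 + p + 4 * p ^ 2 := by linarith
    have := mul_le_mul_of_nonneg_right this hq.le
    nlinarith [mul_nonneg (sub_nonneg.2 hp1.le) (show 0 ≤
      3 * (0.2738 + p) - 4 * (0.2738 ^ 2 + 0.2738 * p + p ^ 2) by nlinarith)]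
  have f2 : (t + 5) * (p ^ 2 * (1 - p)) ≤ 1.09 := by
    have : (t + 5) * p ^ 2 ≤ 1 + p + 3 * p ^ 2 := by linarith
    have := mul_le_mul_of_nonneg_right this hq.le
    nlinarith [mul_nonneg (sub_nonneg.2 hp1.le) (show 0 ≤
      2 * (0.2738 + p) - 3 * (0.2738 ^ 2 + 0.2738 * p + p ^ 2) by nlinarith)]
  refine ⟨?_, f1⟩
  rw [Nat.cast_choose_two]
  push_cast
  calc ((t : ℝ) + 6) * (t + 6 - 1) / 2 * (p ^ 2 * (1 - p)) ^ 2
      = ((t + 6) * (p ^ 2 * (1 - p))) * ((t + 5) * (p ^ 2 * (1 - p))) / 2 := by ring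
    _ ≤ 1.145 * 1.09 / 2 := by gcongr
    _ ≤ 0.63 := by norm_num

lemma mu_Fst_two_le {n t : ℕ} {p : ℝ} (hp : 0 < p) (hp1 : p < 0.2738)
    (h : (t + 2) * p ^ 2 ≤ 1 + p) (hn : t + 3 * 2 ≤ n) :
    mu p n (Fst n t 2) ≤ 0.99 * p ^ t := by
  have hq : 0 < 1 - p := by linarith
  refine (mu_Fst_le hp.le (by linarith) hn).trans ?_
  obtain ⟨f1, f2⟩ := choose_two_weight hp hp1 h
  simp only [Finset.sum_range_succ, Finset.sum_range_zero]
  have e0 : (t + 3 * 2).choose (t + 2 * 2 + 0) = (t + 6).choose 2 :=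
    Nat.choose_symm_of_eq_add (by ring)
  have e1 : (t + 3 * 2).choose (t + 2 * 2 + 1) = t + 6 := by
    rw [show t + 3 * 2 = t + 2 * 2 + 1 + 1 by ring, Nat.choose_succ_self_right]
  have e2 : (t + 3 * 2).choose (t + 2 * 2 + 2) = 1 := by
    rw [show t + 3 * 2 = t + 2 * 2 + 2 by ring, Nat.choose_self]
  rw [e0, e1, e2, show t + 3 * 2 - (t + 2 * 2 + 0) = 2 by omega,
    show t + 3 * 2 - (t + 2 * 2 + 1) = 1 by omega, show t + 3 * 2 - (t + 2 * 2 + 2) = 0 by omega]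
  have hP : 0 < p ^ t := by positivity
  have h3 : p ^ 3 ≤ 0.03 := by
    calc p ^ 3 ≤ 0.2738 ^ 3 := by gcongr
      _ ≤ 0.03 := by norm_num
  have h6 : p ^ 6 ≤ 0.001 := by
    calc p ^ 6 = p ^ 3 * p ^ 3 := by ring
      _ ≤ 0.03 * 0.03 := by gcongr
      _ ≤ 0.001 := by norm_num
  have h5 : (t + 6) * (p ^ 2 * (1 - p)) * p ^ 3 ≤ 1.145 * 0.03 := by gcongr
  push_cast
  calc _ = (((t + 6).choose 2 : ℝ) * (p ^ 2 * (1 - p)) ^ 2 +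
        (t + 6) * (p ^ 2 * (1 - p)) * p ^ 3 + p ^ 6) * p ^ t := by ring
    _ ≤ 0.99 * p ^ t := by gcongr; linarith

/-- A shifted up-closed 3-wise `t`-intersecting family contained in neither `F_0^t` nor `F_1^t` has
measure bounded away from `p^t`. -/
lemma nontrivial_bound {n t : ℕ} {p : ℝ} {U : Finset (Finset ℕ)} (ht : 15 ≤ t) (hp : 0 < p)
    (hpp : p ≤ p0 t) (hF : FamilyOn n U) (hS : Shifted n U) (hM : InclMaximal n U)
    (hI : Intersecting3 t U) (h0 : ¬ U ⊆ Fst n t 0) (h1 : ¬ U ⊆ Fst n t 1) :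
    mu p n U ≤ 0.99 * p ^ t := by
  have hquad := p_quad ht hp hpp
  have hp1 := p_lt ht hp hquad
  have hq : 0 < 1 - p := by linarith
  have hplt : p < 1 := by linarith
  have ht1 : 1 ≤ t := by omega
  have ht0 : (0 : ℝ) ≤ t := Nat.cast_nonneg t
  obtain ⟨ha, hpa⟩ := alpha_spec hp hplt
  set a := alpha p
  have hale := alpha_le hp hp1 ha hpa
  have hat := alpha_pow_le hp ha hpa hquad
  have hr : a + a ^ 2 ≤ 1 := by nlinarith
  have ha2 : a ^ 2 ≤ 0.0853 := by nlinarith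
  have hP : 0 < p ^ t := by positivity
  have hA : a ^ (t + 1) ≤ 0.794 * p ^ t := by
    calc a ^ (t + 1) = a ^ t * a := pow_succ _ _
      _ ≤ (2.7183 * p ^ t) * 0.292 := by gcongr
      _ ≤ 0.794 * p ^ t := by nlinarith
  have hpq : p ^ 2 * (1 - p) ≤ 0.0546 := by
    nlinarith [mul_nonneg (sub_nonneg.2 hp1.le) (show 0 ≤
      (0.2738 + p) - (0.2738 ^ 2 + 0.2738 * p + p ^ 2) by nlinarith)]
  by_cases htw : ∀ G ∈ U, Crit n t G →
      ∃ j k, j < k ∧ k ≤ n ∧ 3 * cnt G j = 2 * j + t ∧ 3 * cnt G k = 2 * k + t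
  -- every walk either crosses the line `y = 2x + t` or touches it twice
  · have h := mu_le_twice (t := t) hp hplt ha hpa hr hF (fun G hG => by
      by_cases hcr : Crit n t G
      · exact Or.inr (htw G hG hcr)
      · exact Or.inl (not_crit hcr))
    have e : a + (1 - a) * ((1 - p) * a ^ 2) ≤ 0.36 := by
      have : (1 - p) * a ^ 2 ≤ a ^ 2 := by nlinarith [sq_nonneg a]
      have := mul_le_mul_of_nonneg_left this (show 0 ≤ 1 - a by linarith)
      have : (1 - a) * a ^ 2 ≤ 0.0605 := by
        nlinarith [mul_nonneg (sub_nonneg.2 hale) (show 0 ≤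
          (0.292 + a) - (0.292 ^ 2 + 0.292 * a + a ^ 2) by nlinarith)]
      linarith
    calc mu p n U ≤ (a + (1 - a) * ((1 - p) * a ^ 2)) * a ^ t := by
          refine h.trans (le_of_eq ?_); ring
      _ ≤ 0.36 * (2.7183 * p ^ t) := by gcongr
      _ ≤ 0.99 * p ^ t := by nlinarith
  · push Not at htw
    obtain ⟨G₁, hG₁, hcr₁, huniq⟩ := htw
    obtain ⟨k₀, hk₀, hit⟩ := frankl ht1 hS hF hI _ G₁ hG₁ G₁ hG₁ G₁ hG₁ rfl
    have hit' : 3 * cnt G₁ k₀ = 2 * k₀ + t := by have := hcr₁ k₀ hk₀; omega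
    -- the unique contact point of `G₁` is shared by all walks that do not cross the line
    have hshare : ∀ G ∈ U, Crit n t G → 3 * cnt G k₀ = 2 * k₀ + t := by
      intro G hG hcr
      obtain ⟨k, hk, h⟩ := frankl ht1 hS hF hI _ G₁ hG₁ G hG G hG rfl
      have c1 := hcr k hk
      have c2 := hcr₁ k hk
      have hitk : 3 * cnt G₁ k = 2 * k + t := by omega
      rcases lt_trichotomy k k₀ with hlt | rfl | hlt
      · exact absurd hit' (huniq k k₀ hlt hk₀ hitk)
      · omega
      · exact absurd hitk (huniq k₀ k hlt hk hit')
    have hle := cnt_le G₁ k₀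
    obtain ⟨s, rfl⟩ : ∃ s, k₀ = t + 3 * s := ⟨(k₀ - t) / 3, by omega⟩
    have hc : ∀ G ∈ U, Crit n t G → cnt G (t + 3 * s) = t + 2 * s := by
      intro G hG hcr
      have := hshare G hG hcr
      omega
    obtain rfl | rfl | rfl | hs : s = 0 ∨ s = 1 ∨ s = 2 ∨ 3 ≤ s := by omega
    · have h := contact_zero ht1 hp hplt ha hpa hr hF hS hM hI h0 hc
      nlinarith
    · have h := contact_one ht1 hp hplt ha hpa hr hF hS hM hI hk₀ h1 hc
      have e : (t + 3) * (p ^ 2 * (1 - p)) ≤ 1 := by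
        have : (t + 3) * p ^ 2 ≤ 1 + p + p ^ 2 := by linarith
        have := mul_le_mul_of_nonneg_right this hq.le
        nlinarith [pow_pos hp 3]
      have e2 : p ^ 2 * (1 - p) * ((1 - a) + a ^ 2 * (t + 3)) ≤ 0.0546 + 0.0853 := by
        have i1 : p ^ 2 * (1 - p) * (1 - a) ≤ 0.0546 * 1 := by gcongr <;> linarith
        have i2 : a ^ 2 * ((t + 3) * (p ^ 2 * (1 - p))) ≤ 0.0853 * 1 := by gcongr
        linarith
      have := mul_le_mul_of_nonneg_left e2 hP.le
      linarith
    · by_cases h2 : U ⊆ Fst n t 2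
      · exact (mu_mono hp.le hplt.le h2).trans (mu_Fst_two_le hp hp1 hquad hk₀)
      · have h := contact_two ht1 hp hplt ha (by linarith) hpa hr hF hS hM hI hk₀ h2 hc
        obtain ⟨f1, _⟩ := choose_two_weight hp hp1 hquad
        have e : (2 * t + 3) * (p ^ 2 * (1 - p)) ≤ 2 := by
          have : (2 * t + 3) * p ^ 2 ≤ 2 * (1 + p) := by nlinarith
          have := mul_le_mul_of_nonneg_right this hq.le
          nlinarith
        have e2 : (p ^ 2 * (1 - p)) ^ 2 *
            ((1 - a) * (2 * t + 3) + a ^ 2 * ((t + 6).choose 2 : ℝ)) ≤ 0.165 := by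
          have i1 : (1 - a) * (((2 * t + 3) * (p ^ 2 * (1 - p))) * (p ^ 2 * (1 - p))) ≤
              1 * (2 * 0.0546) := by gcongr; linarith
          have i2 : a ^ 2 * (((t + 6).choose 2 : ℝ) * (p ^ 2 * (1 - p)) ^ 2) ≤ 0.0853 * 0.63 := by
            gcongr
          linarith
        have := mul_le_mul_of_nonneg_left e2 hP.le
        linarith
    · have h := contact_large hp hplt ha (by linarith) hpa hr hF hk₀ hc
      have hw := ballot_weight_le hs hp hp1 hquad
      have i1 : (1 - a) * (ballot s (t + 2 * s) * (p ^ 2 * (1 - p)) ^ s) ≤ (1 - a) * 0.273 := by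
        gcongr; linarith
      have i2 := mul_le_mul_of_nonneg_left i1 hP.le
      have i3 : a ^ (t + 1) ≤ (2.7183 * p ^ t) * a := by
        rw [pow_succ]; gcongr
      have i4 : p ^ t * a ≤ p ^ t * 0.292 := by gcongr
      linarith

/-! ### The two extremal families -/

lemma mu_Fst_zero_le {n t : ℕ} {p : ℝ} (hp : 0 < p) (hp1 : p < 1) :
    mu p n (Fst n t 0) ≤ p ^ t := by
  rcases le_or_gt (t + 3 * 0) n with hn | hn
  · refine (mu_Fst_le hp.le hp1.le hn).trans (le_of_eq ?_)
    simp
  · have : Fst n t 0 = ∅ := by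
      rw [Fst, Finset.filter_eq_empty_iff]
      intro F hF
      have h1 := Finset.card_le_card (mem_powerset.1 hF)
      have h2 := Finset.card_le_card (Finset.inter_subset_left (s₁ := F)
        (s₂ := Finset.Icc 1 (t + 3 * 0)))
      rw [Nat.card_Icc] at h1
      omega
    rw [this, mu, Finset.sum_empty]
    positivity

lemma mu_Fst_one_le {n t : ℕ} {p : ℝ} (hp : 0 < p) (hp1 : p < 1)
    (h : (t + 2) * p ^ 2 ≤ 1 + p) : mu p n (Fst n t 1) ≤ p ^ t := by
  have hP : 0 < p ^ t := by positivity
  rcases le_or_gt (t + 3 * 1) n with hn | hn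
  · refine (mu_Fst_le hp.le hp1.le hn).trans ?_
    simp only [Finset.sum_range_succ, Finset.sum_range_zero]
    have e1 : (t + 3 * 1).choose (t + 2 * 1 + 0) = t + 3 := by
      rw [show t + 3 * 1 = t + 2 * 1 + 0 + 1 by ring, Nat.choose_succ_self_right]
    have e2 : (t + 3 * 1).choose (t + 2 * 1 + 1) = 1 := by
      rw [show t + 3 * 1 = t + 2 * 1 + 1 by ring, Nat.choose_self]
    rw [e1, e2, show t + 3 * 1 - (t + 2 * 1 + 0) = 1 by omega,
      show t + 3 * 1 - (t + 2 * 1 + 1) = 0 by omega]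
    have h2 := mul_le_mul_of_nonneg_right h (show 0 ≤ 1 - p by linarith)
    have h3 : (t + 3) * p ^ 2 * (1 - p) + p ^ 3 ≤ 1 := by nlinarith
    push_cast
    calc _ = ((t + 3) * p ^ 2 * (1 - p) + p ^ 3) * p ^ t := by ring
      _ ≤ 1 * p ^ t := by gcongr
      _ = p ^ t := one_mul _
  · refine (mu_mono hp.le hp1.le ?_).trans (mu_Fst_zero_le (n := n) (t := t) hp hp1)
    -- `n ≤ t + 2`, so `|F ∩ [t+3]| ≥ t + 2` forces `F = [n]`
    intro F hF
    simp only [Fst, mem_filter, mem_powerset] at hF ⊢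
    refine ⟨hF.1, ?_⟩
    have h1 := Finset.card_le_card hF.1
    have h2 := Finset.card_le_card (Finset.inter_subset_left (s₁ := F)
        (s₂ := Finset.Icc 1 (t + 3 * 1)))
    rw [Nat.card_Icc] at h1
    have h3 : F = Finset.Icc 1 n :=
      Finset.eq_of_subset_of_card_le hF.1 (by rw [Nat.card_Icc]; omega)
    rw [h3, Finset.inter_eq_right.2 (Finset.Icc_subset_Icc_right (by omega)), Nat.card_Icc]
    omega

/-- Theorem 2 (stability): for `t ≥ 15` and `0 < p ≤ p₀(t)` there are
`ε₀, C > 0` such that every shifted 3-wise `t`-intersecting family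
`𝒢 ⊆ 2^[n]` with `μ_p(𝒢) = p^t − ε`, `0 < ε < ε₀`, satisfies
`μ_p(F △ 𝒢) < Cε` for some `F ∈ {F_0^t, F_1^t}`. -/
theorem thm2 (t : ℕ) (ht : 15 ≤ t) (p : ℝ) (hp : 0 < p) (hpp : p ≤ p0 t) :
    ∃ ε₀ C : ℝ, 0 < ε₀ ∧ 0 < C ∧
      ∀ ε : ℝ, 0 < ε → ε < ε₀ → ∀ n : ℕ, ∀ 𝒢 : Finset (Finset ℕ),
        FamilyOn n 𝒢 → Shifted n 𝒢 → Intersecting3 t 𝒢 →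
        mu p n 𝒢 = p ^ t - ε →
        ∃ s ∈ ({0, 1} : Finset ℕ),
          mu p n ((Fst n t s ∪ 𝒢) \ (Fst n t s ∩ 𝒢)) < C * ε := by
  have hquad := p_quad ht hp hpp
  have hp1 : p < 1 := by linarith [p_lt ht hp hquad]
  have hP : 0 < p ^ t := by positivity
  refine ⟨p ^ t / 100, 2, by positivity, by norm_num, ?_⟩
  intro ε hε hε' n 𝒢 hF hS hI hmu
  have hsub := subset_upClosure hF
  -- a family contained in `F_s^t` differs from it in measure by at most `p^t - (p^t - ε)`
  have fin : ∀ s, mu p n (Fst n t s) ≤ p ^ t → upClosure n 𝒢 ⊆ Fst n t s →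
      mu p n ((Fst n t s ∪ 𝒢) \ (Fst n t s ∩ 𝒢)) < 2 * ε := by
    intro s hs hU
    have hG : 𝒢 ⊆ Fst n t s := hsub.trans hU
    rw [Finset.union_eq_left.2 hG, Finset.inter_eq_right.2 hG]
    have e : mu p n (Fst n t s \ 𝒢) + mu p n 𝒢 = mu p n (Fst n t s) := Finset.sum_sdiff hG
    linarith
  by_cases h0 : upClosure n 𝒢 ⊆ Fst n t 0
  · exact ⟨0, by simp, fin 0 (mu_Fst_zero_le hp hp1) h0⟩
  by_cases h1 : upClosure n 𝒢 ⊆ Fst n t 1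
  · exact ⟨1, by simp, fin 1 (mu_Fst_one_le hp hp1 hquad) h1⟩
  have hb := nontrivial_bound ht hp hpp (upClosure_familyOn n 𝒢) (upClosure_shifted hS)
    (upClosure_inclMaximal n 𝒢) (upClosure_intersecting3 hI) h0 h1
  have := mu_mono hp.le hp1.le (n := n) hsub
  exfalso
  linarith
end

section
/- Let t ≥ 1 be an integer, n ≥ t+3, and 0 < p < 1. Then μ_p(F_0^t) ≥ μ_p(F_1^t) holds if and only if p ≤ p_0(t) = 2/(√(4t+9)−1). -/
/-!
Membership in `F_s^t` depends only on `F ∩ [t+3s]`, and averaging out the elements beyond `t+3s`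
leaves the measure unchanged, since each of them contributes a factor `p + (1-p) = 1`
(`mu_Fst_eq`). Hence `μ_p(F_s^t)` is a binomial tail, and in particular
`μ_p(F_0^t) = p^t` and `μ_p(F_1^t) = p^(t+3) + (t+3) p^(t+2) (1-p)`.

Dividing by `p^t`, the inequality `μ_p(F_1^t) ≤ μ_p(F_0^t)` reads `(t+3) p²(1-p) ≤ 1 - p³`, and
dividing by `1-p` it becomes the quadratic inequality `(t+2) p² - p - 1 ≤ 0`. Its positive root is
`p₀(t)`, because `(√(4t+9) - 1)(√(4t+9) + 1) = 4(t+2)`.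
-/

open Finset

/-- The elements of `[n]` outside `[m]` do not affect the measure of a family determined by the
size of the trace on `[m]`. -/
lemma sum_trace_eq (p : ℝ) (m c n : ℕ) (hn : m ≤ n) :
    (∑ F ∈ (Finset.Icc 1 n).powerset,
      if c ≤ (F ∩ Finset.Icc 1 m).card then p ^ F.card * (1 - p) ^ (n - F.card) else 0) =
    ∑ F ∈ (Finset.Icc 1 m).powerset,
      if c ≤ F.card then p ^ F.card * (1 - p) ^ (m - F.card) else 0 := by
  induction n, hn using Nat.le_induction with
  | base =>
    refine Finset.sum_congr rfl fun F hF => ?_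
    rw [Finset.inter_eq_left.2 (Finset.mem_powerset.1 hF)]
  | succ n hmn ih =>
    rw [← ih, ← Finset.insert_Icc_right_eq_Icc_add_one (by omega),
      Finset.sum_powerset_insert (by simp), ← Finset.sum_add_distrib]
    refine Finset.sum_congr rfl fun F hF => ?_
    have hsub := Finset.mem_powerset.1 hF
    have hnot : n + 1 ∉ F := fun h => by simpa using hsub h
    have hcard : F.card ≤ n := by simpa using Finset.card_le_card hsub
    rw [Finset.insert_inter_of_notMem (by simp; omega), Finset.card_insert_of_notMem hnot]
    split_ifs
    · rw [Nat.add_sub_add_right, Nat.sub_add_comm hcard]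
      ring
    · simp

lemma mu_Fst_eq (p : ℝ) (n t s : ℕ) (hn : t + 3 * s ≤ n) :
    mu p n (Fst n t s) = ∑ k ∈ Finset.range (t + 3 * s + 1),
      ((t + 3 * s).choose k : ℝ) *
        (if t + 2 * s ≤ k then p ^ k * (1 - p) ^ (t + 3 * s - k) else 0) := by
  rw [mu, Fst, Finset.sum_filter, sum_trace_eq p _ _ n hn,
    Finset.sum_powerset_apply_card
      (fun k => if t + 2 * s ≤ k then p ^ k * (1 - p) ^ (t + 3 * s - k) else 0)]
  simp

lemma mu_Fst_zero (p : ℝ) (n t : ℕ) (hn : t ≤ n) : mu p n (Fst n t 0) = p ^ t := by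
  rw [mu_Fst_eq p n t 0 (by simpa using hn), Finset.sum_range_succ, Finset.sum_eq_zero]
  · simp
  · intro k hk
    rw [Finset.mem_range] at hk
    rw [if_neg (by omega), mul_zero]

lemma mu_Fst_one (p : ℝ) (n t : ℕ) (hn : t + 3 ≤ n) :
    mu p n (Fst n t 1) = p ^ (t + 3) + (t + 3) * p ^ (t + 2) * (1 - p) := by
  rw [mu_Fst_eq p n t 1 (by simpa using hn), Finset.sum_range_succ,
    show t + 3 * 1 = (t + 2) + 1 by ring, Finset.sum_range_succ, Finset.sum_eq_zero]
  · rw [if_pos (by omega), if_pos (by omega), Nat.choose_self, Nat.choose_succ_self_right]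
    simp only [Nat.add_sub_cancel_left, Nat.sub_self]
    push_cast
    ring
  · intro k hk
    rw [Finset.mem_range] at hk
    rw [if_neg (by omega), mul_zero]

/-- `p₀(t)` is the positive root of `(t+2) x² - x - 1`. -/
lemma quadratic_nonpos_iff (t : ℕ) (p : ℝ) (hp : 0 < p) :
    (t + 2) * p ^ 2 - p - 1 ≤ 0 ↔ p ≤ p0 t := by
  have ht : (0 : ℝ) ≤ t := t.cast_nonneg
  have hsq : Real.sqrt (4 * t + 9) ^ 2 = 4 * t + 9 := Real.sq_sqrt (by positivity)
  have hs : 1 < Real.sqrt (4 * t + 9) := Real.lt_sqrt_of_sq_lt (by linarith)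
  rw [p0]
  generalize Real.sqrt (4 * t + 9) = r at hsq hs
  rw [le_div_iff₀ (by linarith)]
  -- With `r = √(4t+9)`, the quadratic splits into linear factors; the second one is positive.
  have hfac : (t + 2) * p ^ 2 - p - 1 = (p * (r - 1) - 2) * (p * (r + 1) + 2) / 4 := by
    linear_combination (-p ^ 2 / 4) * hsq
  have hpos : 0 < p * (r + 1) + 2 := by nlinarith
  rw [hfac]
  constructor
  · intro h
    by_contra! hlt
    have := mul_pos (sub_pos.2 hlt) hpos
    linarith
  · intro h
    have := mul_nonpos_of_nonpos_of_nonneg (sub_nonpos.2 h) hpos.le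
    linarith

/-- `μ_p(F_0^t) ≥ μ_p(F_1^t)` holds iff `p ≤ p₀(t) = 2/(√(4t+9) − 1)`. -/
theorem mu_F0_ge_mu_F1_iff (t n : ℕ) (ht : 1 ≤ t) (hn : t + 3 ≤ n)
    (p : ℝ) (hp : 0 < p) (hp1 : p < 1) :
    mu p n (Fst n t 1) ≤ mu p n (Fst n t 0) ↔ p ≤ p0 t := by
  have hq : 0 < p ^ t * (1 - p) := mul_pos (pow_pos hp t) (sub_pos.2 hp1)
  have hdiff : p ^ (t + 3) + (t + 3) * p ^ (t + 2) * (1 - p) - p ^ t =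
      p ^ t * (1 - p) * ((t + 2) * p ^ 2 - p - 1) := by ring
  rw [mu_Fst_one p n t hn, mu_Fst_zero p n t (by omega), ← quadratic_nonpos_iff t p hp,
    ← sub_nonpos, hdiff]
  exact ⟨fun h => nonpos_of_mul_nonpos_right h hq,
    mul_nonpos_of_nonneg_of_nonpos hq.le⟩
end

section
/- Let n ≥ t ≥ 1 and let 𝒢 ⊆ 2^[n] be a shifted 3-wise t-intersecting family. Then every G ∈ 𝒢 hits the line y = 2x + t; that is, for every G ∈ 𝒢 there exists an integer s ≥ 0 with t+3s ≤ n and |G ∩ [t+3s]| = t+2s. -/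
/-!
A walk has steps `+1` and `-2` relative to the line `y = 2x + t`, so a set `G` whose walk misses
the line stays strictly below it: `3 |G ∩ [j]| < 2j + t` for all `j ≤ n` (`walk_below_of_not_hit`).
For each residue `r ∈ {0, 1, 2}` the set `gapSet n t r = [n] ∖ {t + r, t + r + 3, …}` then has at
least as many elements as `G` in every initial segment (`card_gapSet_prefix`). In a shifted family
such a domination allows `G` to be shifted into a subset of the dominating set
(`exists_subset_of_dominated`). This gives three members of the family lying in the three gap
sets; the intersection of the gap sets is `[t - 1]`, contradicting `t`-intersection.
-/

open Finset

lemma card_inter_Icc_succ (G : Finset ℕ) (j : ℕ) :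
    (G ∩ Icc 1 (j + 1)).card = (G ∩ Icc 1 j).card + if j + 1 ∈ G then 1 else 0 := by
  have hI : Icc 1 (j + 1) = insert (j + 1) (Icc 1 j) := by
    ext x; simp only [mem_Icc, mem_insert]; omega
  rw [hI]
  split_ifs with h
  · rw [inter_insert_of_mem h, card_insert_of_notMem (by simp)]
  · rw [inter_insert_of_notMem h, add_zero]

lemma card_inter_Icc_add_Ioc (G : Finset ℕ) {k j : ℕ} (h : k ≤ j) :
    (G ∩ Icc 1 j).card = (G ∩ Icc 1 k).card + (G ∩ Ioc k j).card := by
  rw [← card_union_of_disjoint]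
  · congr 1
    ext x; simp only [mem_inter, mem_union, mem_Icc, mem_Ioc]
    constructor
    · rintro ⟨hx, h1, h2⟩
      by_cases hk : x ≤ k
      · exact Or.inl ⟨hx, h1, hk⟩
      · exact Or.inr ⟨hx, by omega, h2⟩
    · rintro (⟨hx, h1, h2⟩ | ⟨hx, h1, h2⟩)
      · exact ⟨hx, h1, by omega⟩
      · exact ⟨hx, by omega, h2⟩
  · rw [disjoint_left]
    intro x; simp only [mem_inter, mem_Icc, mem_Ioc]; omega

/-- If `H` has at least as many elements as `G` in every initial segment, then shifting moves `G`
inside `H`. An element `j ∈ G ∖ H` is replaced by the largest `i < j` in `H ∖ G`; maximality of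
`i` is what preserves the domination, and `|G ∖ H|` drops. -/
lemma exists_subset_of_dominated {n : ℕ} {𝒢 : Finset (Finset ℕ)} (hfam : FamilyOn n 𝒢)
    (hsh : Shifted n 𝒢) (H : Finset ℕ) (m : ℕ) :
    ∀ G ∈ 𝒢, (G \ H).card = m →
      (∀ k ≤ n, (G ∩ Icc 1 k).card ≤ (H ∩ Icc 1 k).card) → ∃ G' ∈ 𝒢, G' ⊆ H := by
  induction m with
  | zero =>
    intro G hG hc _
    exact ⟨G, hG, sdiff_eq_empty_iff_subset.mp (card_eq_zero.mp hc)⟩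
  | succ m ih =>
    intro G hG hc hdom
    obtain ⟨j, hj⟩ := card_pos.mp (by omega : 0 < (G \ H).card)
    obtain ⟨hjG, hjH⟩ := mem_sdiff.mp hj
    obtain ⟨hj1, hjn⟩ := mem_Icc.mp (hfam G hG hjG)
    have hne : ((H ∩ Icc 1 j) \ G).Nonempty := by
      by_contra hemp
      rw [not_nonempty_iff_eq_empty, sdiff_eq_empty_iff_subset] at hemp
      have hlt : (H ∩ Icc 1 j).card < (G ∩ Icc 1 j).card := by
        apply card_lt_card
        refine (ssubset_iff_of_subset ?_).mpr ⟨j, ?_, ?_⟩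
        · exact subset_inter hemp inter_subset_right
        · simp [hjG, hj1]
        · simp [hjH]
      have := hdom j hjn
      omega
    obtain ⟨i, hi, himax⟩ := exists_max_image _ id hne
    simp only [mem_sdiff, mem_inter, mem_Icc, id] at hi himax
    obtain ⟨⟨hiH, hi1, hij⟩, hiG⟩ := hi
    have hij' : i < j := lt_of_le_of_ne hij (by rintro rfl; exact hiG hjG)
    refine ih _ (hsh i j hi1 hij' hjn G hG hjG hiG) ?_ ?_
    · have : insert i (G.erase j) \ H = (G \ H).erase j := by
        ext x; simp only [mem_sdiff, mem_insert, mem_erase]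
        constructor
        · rintro ⟨rfl | h, h2⟩
          · exact absurd hiH h2
          · exact ⟨h.1, h.2, h2⟩
        · rintro ⟨h, h1, h2⟩
          exact ⟨Or.inr ⟨h, h1⟩, h2⟩
      rw [this, card_erase_of_mem hj]; omega
    · intro k hk
      rcases lt_or_ge k i with hki | hki
      · -- the shift does not touch `[k]`
        refine le_trans (card_le_card ?_) (hdom k hk)
        intro x; simp only [mem_inter, mem_insert, mem_erase, mem_Icc]
        rintro ⟨rfl | h, h1⟩
        · omega
        · exact ⟨h.2, h1⟩
      rcases lt_or_ge k j with hkj | hkj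
      · -- `[k]` gains `i`; since `H ∩ (k, j] ⊆ G ∩ (k, j)`, there is one unit of slack at `k`
        have h1 : (insert i (G.erase j) ∩ Icc 1 k).card ≤ (G ∩ Icc 1 k).card + 1 := by
          refine le_trans (card_le_card ?_) (card_insert_le i (G ∩ Icc 1 k))
          intro x; simp only [mem_inter, mem_insert, mem_erase]; tauto
        have h2 : (H ∩ Ioc k j).card < (G ∩ Ioc k j).card := by
          apply card_lt_card
          refine (ssubset_iff_of_subset ?_).mpr ⟨j, ?_, ?_⟩
          · intro x; simp only [mem_inter, mem_Ioc]
            rintro ⟨hx, hx1, hx2⟩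
            refine ⟨?_, hx1, hx2⟩
            by_contra hxG
            have := himax x ⟨⟨hx, by omega, hx2⟩, hxG⟩
            omega
          · simp [hjG, hkj]
          · simp [hjH]
        have h3 := hdom j hjn
        rw [card_inter_Icc_add_Ioc G hkj.le, card_inter_Icc_add_Ioc H hkj.le] at h3
        omega
      · -- `[k]` gains `i` and loses `j`
        refine le_trans ?_ (hdom k hk)
        have hsub : insert i (G.erase j) ∩ Icc 1 k ⊆ insert i ((G ∩ Icc 1 k).erase j) := by
          intro x; simp only [mem_inter, mem_insert, mem_erase]; tauto
        have hjk : j ∈ G ∩ Icc 1 k := by simp [hjG, hj1, hkj]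
        have h1 := (card_le_card hsub).trans (card_insert_le _ _)
        rwa [card_erase_add_one hjk] at h1

/-- `[n]` with the elements `t + r, t + r + 3, t + r + 6, …` removed (for `r < 3`). -/
def gapSet (n t r : ℕ) : Finset ℕ :=
  (Icc 1 n).filter (fun x => x < t ∨ (x - t) % 3 ≠ r)

/-- The quotient counts the removed elements in `[j]`; the truncated subtraction makes it `0`
for `j < t + r`. -/
lemma card_gapSet_prefix {n t r : ℕ} (ht : 1 ≤ t) (hr : r < 3) (j : ℕ) (hj : j ≤ n) :
    (gapSet n t r ∩ Icc 1 j).card + (j + 3 - t - r) / 3 = j := by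
  induction j with
  | zero => simp; omega
  | succ j ih =>
    have ih := ih (by omega)
    rw [card_inter_Icc_succ]
    have hmem : j + 1 ∈ gapSet n t r ↔ (j + 1 < t ∨ (j + 1 - t) % 3 ≠ r) := by
      simp only [gapSet, mem_filter, mem_Icc]; omega
    split_ifs with h
    · rw [hmem] at h; omega
    · rw [hmem] at h; omega

/-- A walk that never meets the line `y = 2x + t` stays strictly below it, because the quantity
`3 |G ∩ [j]| - 2 j - t` starts negative and increases by at most one per step. -/
lemma walk_below_of_not_hit {t n : ℕ} (ht : 1 ≤ t) (G : Finset ℕ)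
    (h : ¬ ∃ s : ℕ, t + 3 * s ≤ n ∧ (G ∩ Icc 1 (t + 3 * s)).card = t + 2 * s)
    (j : ℕ) (hj : j ≤ n) : 3 * (G ∩ Icc 1 j).card < 2 * j + t := by
  induction j with
  | zero => simp; omega
  | succ j ih =>
    have ih := ih (by omega)
    by_contra hge
    have hle : (G ∩ Icc 1 (j + 1)).card ≤ j + 1 :=
      (card_le_card inter_subset_right).trans (by simp)
    have hstep : (G ∩ Icc 1 (j + 1)).card ≤ (G ∩ Icc 1 j).card + 1 := by
      rw [card_inter_Icc_succ]; split_ifs <;> omega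
    obtain ⟨s, hs⟩ : ∃ s, j + 1 = t + 3 * s := ⟨(j + 1 - t) / 3, by omega⟩
    exact h ⟨s, by omega, by rw [← hs]; omega⟩

/-- Lemma 1: every member of a shifted 3-wise `t`-intersecting family hits the
line `y = 2x + t`, i.e. `|G ∩ [t+3s]| = t+2s` for some `s ≥ 0` with `t+3s ≤ n`. -/
theorem lemma1 (t n : ℕ) (ht : 1 ≤ t) (hn : t ≤ n)
    (𝒢 : Finset (Finset ℕ)) (hfam : FamilyOn n 𝒢)
    (hsh : Shifted n 𝒢) (hint : Intersecting3 t 𝒢) :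
    ∀ G ∈ 𝒢, ∃ s : ℕ, t + 3 * s ≤ n ∧
      (G ∩ Finset.Icc 1 (t + 3 * s)).card = t + 2 * s := by
  intro G hG
  by_contra hno
  have hex : ∀ r < 3, ∃ G' ∈ 𝒢, G' ⊆ gapSet n t r := by
    intro r hr
    refine exists_subset_of_dominated hfam hsh _ _ G hG rfl fun k hk => ?_
    have h1 := walk_below_of_not_hit ht G hno k hk
    have h2 := card_gapSet_prefix ht hr k hk
    have h3 : (G ∩ Icc 1 k).card ≤ k := (card_le_card inter_subset_right).trans (by simp)
    omega
  obtain ⟨A, hA, hA'⟩ := hex 0 (by omega)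
  obtain ⟨B, hB, hB'⟩ := hex 1 (by omega)
  obtain ⟨C, hC, hC'⟩ := hex 2 (by omega)
  have hsub : A ∩ B ∩ C ⊆ Icc 1 (t - 1) := by
    intro x hx
    simp only [mem_inter] at hx
    have ha := hA' hx.1.1
    have hb := hB' hx.1.2
    have hc := hC' hx.2
    simp only [gapSet, mem_filter, mem_Icc] at ha hb hc ⊢
    omega
  have h1 := card_le_card hsub
  have h2 := hint A hA B hB C hC
  rw [Nat.card_Icc] at h1
  omega
end
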